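/- arXiv:2501.00667 — 3 statements merged into one kernel-verified Lean document; each statement's English description precedes it below -/
import Mathlib

section
/- Let T ⊂ ℝ² be a rational triangle (the convex hull of three non-collinear points of ℚ²) that is pseudointegral and contains exactly one lattice point in its interior. Then the number b of lattice points on the boundary of T satisfies 1 ≤ b ≤ 9 and b ≠ 7. -/
open Set Pointwise

/-- The set of lattice points of the plane. -/
def latticePts : Set (ℝ × ℝ) := {p | ∃ m n : ℤ, p = ((m : ℝ), (n : ℝ))}

/-- The coercion of a rational point of the plane to a real point. -/
def qpt (v : ℚ × ℚ) : ℝ × ℝ := ((v.1 : ℝ), (v.2 : ℝ))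

/-- The Ehrhart function of a set `P ⊆ ℝ²`:  `t ↦ #(tP ∩ ℤ²)`. -/
noncomputable def ehr (P : Set (ℝ × ℝ)) (t : ℕ) : ℕ :=
  (((t : ℝ) • P) ∩ latticePts).ncard

/-- A set `P ⊆ ℝ²` is pseudointegral (a PIP) if its Ehrhart function agrees with
a polynomial at all positive integers. -/
def IsPIP (P : Set (ℝ × ℝ)) : Prop :=
  ∃ c : Polynomial ℚ, ∀ t : ℕ, 0 < t → (ehr P t : ℚ) = c.eval (t : ℚ)

/-- A rational triangle: the convex hull of three non-collinear rational points. -/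
def IsRatTriangle (T : Set (ℝ × ℝ)) : Prop :=
  ∃ p q r : ℚ × ℚ, ¬ Collinear ℝ ({qpt p, qpt q, qpt r} : Set (ℝ × ℝ)) ∧
    T = convexHull ℝ {qpt p, qpt q, qpt r}

/-!
Let `F t` count the lattice points of `t • T` for `0 ≤ t` and those in the interior of `-t • T` for
`t < 0`. In homogeneous barycentric coordinates, it sums `[0 ≤ α, β, γ] + [α, β, γ < 0]` over the
lattice points at level `t`, and the mixed differences of this function along two edges of the cone
over `T` are indicator functions of half-open parallelograms. So, for all `t : ℤ`,
`F (t + 2 * N) - 2 * F (t + N) + F t` is the normalized area of `N • T`, where `N` is a common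
denominator of the vertices, and a polynomial that gives `F` at the positive integers gives it
everywhere. From `F 0 = F (-1) = 1` we get `F (-t) = F (t - 1)`: translation by the interior
lattice point `u` maps the lattice points of the cone onto those of its interior. Hence every
barycentric coordinate takes on the lattice only integer multiples of its value at `u`. The
gradients of the three coordinates sum to zero, so their cross products are equal, of absolute
value `1 / b`. Write the latter as `p * q * x = q * r * y = r * p * z`, where `p`, `q`, `r` are the
coordinates of `u`, with sum `1`, and `x`, `y`, `z` are positive integers. Then
`(x + y + z) ^ 2 = b * (x * y * z)`, and Vieta descent bounds `b`.
-/

/-! ### Vieta descent -/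

section VietaDescent

variable {n x y z : ℕ}

lemma mul_le_nine_of_sq_add_eq_mul (hy : 0 < y) (hxy : x ≤ y) (hyz : y ≤ z) (hz : z ≤ x + y)
    (h : (x + y + z) ^ 2 = n * (x * y * z)) : n * x ≤ 9 := by
  -- `(x + y + z) ^ 2 / z` is convex in `z`, so on `[y, x + y]` it is largest at `z = y`.
  have endpoint : (x + y + z) ^ 2 * y ≤ (x + 2 * y) ^ 2 * z := by
    obtain ⟨d, rfl⟩ := Nat.exists_eq_add_of_le hyz
    obtain ⟨e, rfl⟩ := Nat.exists_eq_add_of_le (show d ≤ x by omega)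
    nlinarith [Nat.zero_le (d * e * e), Nat.zero_le (d * d * e), Nat.zero_le (d * e * y),
      Nat.zero_le (d * d * y), Nat.zero_le (d * d * d)]
  have : n * x * (y ^ 2 * z) ≤ 9 * (y ^ 2 * z) := calc
    n * x * (y ^ 2 * z) = (x + y + z) ^ 2 * y := by rw [h]; ring
    _ ≤ (x + 2 * y) ^ 2 * z := endpoint
    _ ≤ (3 * y) ^ 2 * z := by gcongr; omega
    _ = 9 * (y ^ 2 * z) := by ring
  exact Nat.le_of_mul_le_mul_right this (Nat.mul_pos (pow_pos hy 2) (by omega))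

lemma le_nine_and_ne_seven_of_le_add (hx : 0 < x) (hxy : x ≤ y) (hyz : y ≤ z) (hz : z ≤ x + y)
    (h : (x + y + z) ^ 2 = n * (x * y * z)) : n ≤ 9 ∧ n ≠ 7 := by
  have hnx : n * x ≤ 9 := mul_le_nine_of_sq_add_eq_mul (by omega) hxy hyz hz h
  refine ⟨le_trans (Nat.le_mul_of_pos_right n hx) hnx, ?_⟩
  rintro rfl
  obtain rfl : x = 1 := by omega
  obtain rfl | rfl : z = y ∨ z = y + 1 := by omega
  · have : z * (3 * z) = z * 4 + 1 := by linarith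
    obtain rfl : z = 1 := Nat.dvd_one.1 ((Nat.dvd_add_right ⟨4, rfl⟩).1 ⟨3 * z, this.symm⟩)
    omega
  · have : (y + 1) * (3 * y) = (y + 1) * 4 := by linarith
    have := Nat.eq_of_mul_eq_mul_left (by omega) this
    omega

-- As a quadratic in `z`, the equation has the second root `w = (x + y) ^ 2 / z`.
lemma exists_lt_sq_add_eq_mul (hx : 0 < x) (hz : x + y < z)
    (h : (x + y + z) ^ 2 = n * (x * y * z)) :
    ∃ w, 0 < w ∧ w < z ∧ (x + y + w) ^ 2 = n * (x * y * w) := by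
  have hdvd : z ∣ z * (2 * (x + y) + z) + (x + y) ^ 2 := ⟨n * (x * y), by linarith⟩
  obtain ⟨w, hw⟩ := (Nat.dvd_add_right (Dvd.intro _ rfl)).1 hdvd
  refine ⟨w, ?_, ?_, ?_⟩
  · refine Nat.pos_of_ne_zero ?_
    rintro rfl
    exact (by positivity : (x + y) ^ 2 ≠ 0) hw
  · have : z * w < z * z := by rw [← hw, sq]; gcongr
    exact lt_of_mul_lt_mul_left' this
  · refine Nat.eq_of_mul_eq_mul_left (show 0 < z by omega) ?_
    calc z * (x + y + w) ^ 2 = z * w * w + 2 * (x + y) * (z * w) + z * (x + y) ^ 2 := by ring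
      _ = (x + y) ^ 2 * w + 2 * (x + y) * (z * w) + z * (z * w) := by rw [hw]
      _ = (x + y + z) ^ 2 * w := by ring
      _ = z * (n * (x * y * w)) := by rw [h]; ring

theorem le_nine_and_ne_seven_of_sq_add_eq_mul (hx : 0 < x) (hy : 0 < y) (hz : 0 < z)
    (h : (x + y + z) ^ 2 = n * (x * y * z)) : n ≤ 9 ∧ n ≠ 7 := by
  induction hs : x + y + z using Nat.strong_induction_on generalizing x y z with
  | _ s ih =>
    wlog hxy : x ≤ y generalizing x y
    · exact this hy hx (by linarith) (by omega) (by omega)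
    wlog hyz : y ≤ z generalizing x y z
    · rcases le_total x z with hxz | hzx
      · exact this (hx := hx) (hy := hz) (hz := hy) (by linarith) (by omega) hxz (by omega)
      · exact this (hx := hz) (hy := hx) (hz := hy) (by linarith) (by omega) hzx hxy
    rcases le_or_gt z (x + y) with hz' | hz'
    · exact le_nine_and_ne_seven_of_le_add hx hxy hyz hz' h
    · obtain ⟨w, hw, hwz, hw'⟩ := exists_lt_sq_add_eq_mul hx hz' h
      exact ih (x + y + w) (by omega) hx hy hw hw' rfl

theorem one_le_and_le_nine_and_ne_seven_of_sq_add_eq_mul (hx : 0 < x) (hy : 0 < y) (hz : 0 < z)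
    (h : (x + y + z) ^ 2 = n * (x * y * z)) : 1 ≤ n ∧ n ≤ 9 ∧ n ≠ 7 := by
  refine ⟨Nat.pos_of_ne_zero ?_, le_nine_and_ne_seven_of_sq_add_eq_mul hx hy hz h⟩
  rintro rfl
  simp [hx.ne'] at h

end VietaDescent

/-! ### Second differences of polynomials -/

section SecondDifference

open Polynomial
variable {R : Type*} [Field R] [CharZero R] {K : R}

lemma eq_quadratic_of_second_difference {u : ℕ → R}
    (hu : ∀ k, u (k + 2) - 2 * u (k + 1) + u k = K) (k : ℕ) :
    u k = u 0 + k * (u 1 - u 0) + K * (k * (k - 1) / 2) := by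
  induction k using Nat.twoStepInduction with
  | zero => simp
  | one => simp
  | more k ih₀ ih₁ =>
    have : u (k + 2) = K + 2 * u (k + 1) - u k := by linear_combination hu k
    rw [this, ih₀, ih₁]
    push_cast
    ring

lemma exists_eval_eq_quadratic_of_second_difference {c : R[X]} {N : R} (hN : N ≠ 0)
    (hc : ∀ k : ℕ, c.eval (N * (k + 3)) - 2 * c.eval (N * (k + 2)) + c.eval (N * (k + 1)) = K) :
    ∃ B C, ∀ x, c.eval x = K / (2 * N ^ 2) * x ^ 2 + B * x + C := by
  set u : ℕ → R := fun k ↦ c.eval (N * (k + 1)) with hu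
  have hrec : ∀ k, u (k + 2) - 2 * u (k + 1) + u k = K := fun k ↦ by
    rw [← hc k]
    simp only [hu]
    push_cast
    ring_nf
  set B : R := (u 1 - u 0) / N - 3 * K / (2 * N)
  set C₀ : R := 2 * u 0 - u 1 + K
  have hpoly : c = C (K / (2 * N ^ 2)) * X ^ 2 + C B * X + C C₀ := by
    refine eq_of_infinite_eval_eq _ _ <|
      (infinite_range_of_injective (f := fun k : ℕ ↦ N * ((k : R) + 1)) ?_).mono ?_
    · exact fun k l hkl ↦ by simpa [hN] using hkl
    · rintro _ ⟨k, rfl⟩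
      have hk : c.eval (N * (k + 1)) = _ := eq_quadratic_of_second_difference hrec k
      simp only [mem_ofPred_eq, eval_add, eval_mul, eval_C, eval_pow, eval_X, hk, B, C₀]
      field_simp
      ring
  exact ⟨B, C₀, fun x ↦ by rw [hpoly]; simp⟩

theorem exists_eq_quadratic_of_eval_of_second_difference {F : ℤ → R} {c : R[X]} {N : ℕ}
    (hN : 0 < N) (hF : ∀ t, F (t + 2 * N) - 2 * F (t + N) + F t = K)
    (hc : ∀ t : ℕ, 0 < t → F t = c.eval (t : R)) :
    ∃ B C, ∀ t : ℤ, F t = K / (2 * N ^ 2) * t ^ 2 + B * t + C := by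
  have hN₀ : (N : R) ≠ 0 := by exact_mod_cast hN.ne'
  obtain ⟨B, C, hBC⟩ : ∃ B C, ∀ x, c.eval x = K / (2 * N ^ 2) * x ^ 2 + B * x + C := by
    refine exists_eval_eq_quadratic_of_second_difference hN₀ fun k ↦ ?_
    have hk (j : ℕ) (hj : 0 < j) : F (N * j) = c.eval (N * j : R) := by
      exact_mod_cast hc (N * j) (by positivity)
    have hk₁ := hk (k + 1) (by omega)
    have hk₂ := hk (k + 2) (by omega)
    have hk₃ := hk (k + 3) (by omega)
    push_cast at hk₁ hk₂ hk₃
    rw [← hk₁, ← hk₂, ← hk₃, ← hF (N * (k + 1))]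
    ring_nf
  refine ⟨B, C, ?_⟩
  -- Downward induction: the recurrence determines `F t` from its values at `t + N`, `t + 2 * N`.
  suffices ∀ (m : ℕ) (t : ℤ), -m < t → F t = K / (2 * N ^ 2) * t ^ 2 + B * t + C from
    fun t ↦ this (t.natAbs + 1) t (by omega)
  intro m
  induction m with
  | zero =>
    intro t ht
    lift t to ℕ using by omega
    simpa [hBC] using hc t (by omega)
  | succ m ih =>
    intro t ht
    have : F t = K - F (t + 2 * N) + 2 * F (t + N) := by linear_combination hF t
    rw [this, ih (t + 2 * N) (by omega), ih (t + N) (by omega)]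
    push_cast
    field_simp
    ring

end SecondDifference

/-! ### Rational dual systems on a lattice -/

section DualSystem

variable {ι M K : Type*} [DecidableEq ι] [AddCommGroup M] [Field K]

/-- The functionals `φ i` and the vectors `a j` are dual to each other up to the common factor `N`.
With lattice vectors `a j`, this is how rational coordinates with denominator `N` are encoded. -/
def IsScaledDual (φ : ι → M →+ K) (a : ι → M) (N : K) : Prop :=
  ∀ i j, φ i (a j) = if i = j then N else 0

namespace IsScaledDual

variable {φ : ι → M →+ K} {a : ι → M} {N : K}

lemma apply_sum_zsmul [Fintype ι] (h : IsScaledDual φ a N) (k : ι → ℤ) (i : ι) :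
    φ i (∑ j, k j • a j) = k i * N := by
  simp [h i _]

lemma nsmul (h : IsScaledDual φ a N) (n : ℕ) : IsScaledDual φ (fun j ↦ n • a j) (n • N) :=
  fun i j ↦ by rw [map_nsmul, h, smul_ite, smul_zero]

theorem det_mul_det [Fintype ι] (h : IsScaledDual φ a N) (e : Module.Basis ι ℤ M) :
    (Matrix.of fun i k ↦ φ i (e k)).det * (e.det a : K) = N ^ Fintype.card ι := by
  have hmul : Matrix.of (fun i k ↦ φ i (e k)) * (e.toMatrix a).map (Int.castRingHom K) =
      N • (1 : Matrix ι ι K) := by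
    ext i j
    have := congrArg (φ i) (e.sum_repr (a j))
    simp only [map_sum, map_zsmul, zsmul_eq_mul, h i j] at this
    simp [Matrix.mul_apply, Module.Basis.toMatrix_apply, Matrix.one_apply, ← this, mul_comm]
  rw [Module.Basis.det_apply, ← eq_intCast (Int.castRingHom K), RingHom.map_det,
    RingHom.mapMatrix_apply, ← Matrix.det_mul, hmul, Matrix.det_smul, Matrix.det_one, mul_one]

variable [LinearOrder K] [IsStrictOrderedRing K]

lemma linearIndependent [Finite ι] (h : IsScaledDual φ a N) (hN : 0 < N) :
    LinearIndependent ℤ a := by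
  have := Fintype.ofFinite ι
  refine Fintype.linearIndependent_iff.2 fun k hk i ↦ ?_
  simpa [hk, hN.ne'] using h.apply_sum_zsmul k i

variable [Archimedean K]

lemma isComplement_halfOpenBox [Finite ι] (h : IsScaledDual φ a N) (hN : 0 < N) (α : ι → K) :
    AddSubgroup.IsComplement {x | ∀ i, φ i x + α i ∈ Ico 0 N}
      (Submodule.span ℤ (range a)).toAddSubgroup := by
  have := Fintype.ofFinite ι
  refine AddSubgroup.isComplement_iff_existsUnique_add_neg_mem.2 fun x ↦ ?_
  choose k hk hk' using fun i ↦ existsUnique_sub_zsmul_mem_Ico hN (φ i x + α i) 0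
  have mem_box (l : ι → ℤ) : x + -∑ j, l j • a j ∈ {x | ∀ i, φ i x + α i ∈ Ico 0 N} ↔
      ∀ i, φ i x + α i - l i • N ∈ Ico 0 (0 + N) := by
    refine forall_congr' fun i ↦ ?_
    rw [map_add, map_neg, h.apply_sum_zsmul, zero_add, zsmul_eq_mul, ← sub_eq_add_neg,
      sub_add_eq_add_sub]
  refine ⟨⟨_, (Submodule.mem_span_range_iff_exists_fun ℤ).2 ⟨k, rfl⟩⟩, (mem_box k).2 hk, ?_⟩
  rintro ⟨_, hy⟩ hy'
  obtain ⟨l, rfl⟩ := (Submodule.mem_span_range_iff_exists_fun ℤ).1 hy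
  obtain rfl : l = k := funext fun i ↦ hk' i _ ((mem_box l).1 hy' i)
  rfl

theorem ncard_halfOpenBox [Fintype ι] (h : IsScaledDual φ a N) (hN : 0 < N)
    (e : Module.Basis ι ℤ M) (α : ι → K) :
    {x | ∀ i, φ i x + α i ∈ Ico 0 N}.ncard = (e.det a).natAbs := by
  rw [(h.isComplement_halfOpenBox hN α).ncard_left, AddSubgroup.index_eq_natAbs_det e _
    (Module.Basis.span (h.linearIndependent hN))]
  congr! 3 with i
  exact congrArg Subtype.val (Module.Basis.span_apply _ i)

lemma finite_halfOpenBox [Finite ι] (h : IsScaledDual φ a N) (hN : 0 < N)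
    (e : Module.Basis ι ℤ M) (α : ι → K) : {x | ∀ i, φ i x + α i ∈ Ico 0 N}.Finite := by
  have := Fintype.ofFinite ι
  refine finite_of_ncard_ne_zero ?_
  rw [h.ncard_halfOpenBox hN e, Int.natAbs_ne_zero, ← Int.cast_ne_zero (α := K)]
  refine right_ne_zero_of_mul (a := (Matrix.of fun i k ↦ φ i (e k)).det) ?_
  rw [h.det_mul_det e]
  exact pow_ne_zero _ hN.ne'

theorem finite_setOf_abs_le [Finite ι] (h : IsScaledDual φ a N) (hN : 0 < N)
    (e : Module.Basis ι ℤ M) (α : ι → K) (c : K) : {x | ∀ i, |φ i x + α i| ≤ c}.Finite := by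
  obtain ⟨n, hn⟩ := Archimedean.arch (max 1 (2 * c + 1)) hN
  obtain ⟨hn₁, hn₂⟩ := max_le_iff.1 hn
  refine ((h.nsmul n).finite_halfOpenBox (zero_lt_one.trans_le hn₁) e fun i ↦ α i + c).subset
    fun x hx i ↦ ?_
  have := abs_le.1 (hx i)
  constructor <;> linarith

theorem eq_zero_of_forall_eq_zero [Finite ι] (h : IsScaledDual φ a N) (hN : 0 < N)
    (e : Module.Basis ι ℤ M) {x : M} (hx : ∀ i, φ i x = 0) : x = 0 := by
  have : Module.Free ℤ M := Module.Free.of_basis e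
  by_contra hx₀
  refine (h.finite_setOf_abs_le hN e 0 0).not_infinite <|
    infinite_of_injective_forall_mem (smul_left_injective ℤ hx₀) fun k i ↦ ?_
  simp [hx]

end IsScaledDual

end DualSystem

/-! ### The cone over a rational triangle -/

/-- The cross product of two vectors of the plane, that is, the determinant of the matrix with rows
`a` and `b`. -/
def cross {R : Type*} [CommRing R] (a b : R × R) : R := a.1 * b.2 - a.2 * b.1

lemma cross_eq_cross_of_add_eq_zero {R : Type*} [CommRing R] {a b c : R × R} (h : a + b + c = 0) :
    cross a b = cross b c := by
  obtain rfl : c = -(a + b) := eq_neg_of_add_eq_zero_right h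
  simp only [cross, Prod.fst_neg, Prod.snd_neg, Prod.fst_add, Prod.snd_add]
  ring

/-- The cone over a rational triangle `T`, seen on the lattice `ℤ² × ℤ`: the lattice point `(x, t)`
stands for the point `x / t` of the plane, and `coord i (x, t)` is `t` times its `i`-th barycentric
coordinate with respect to the vertices `vertex j / scale` of `T`. -/
structure TriangleCone where
  coord : Fin 3 → (ℤ × ℤ) × ℤ →+ ℝ
  sum_coord : ∀ v, ∑ i, coord i v = v.2
  scale : ℕ
  scale_pos : 0 < scale
  vertex : Fin 3 → ℤ × ℤ
  isScaledDual : IsScaledDual coord (fun j ↦ (vertex j, (scale : ℤ))) (scale : ℝ)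

namespace TriangleCone

variable (C : TriangleCone)

/-- The lattice points of the dilate `t • T`. -/
def closedSlice (t : ℤ) : Set (ℤ × ℤ) := {x | ∀ i, 0 ≤ C.coord i (x, t)}

/-- The lattice points in the interior of the dilate `t • T`. -/
def openSlice (t : ℤ) : Set (ℤ × ℤ) := {x | ∀ i, 0 < C.coord i (x, t)}

/-- The lattice points at level `t` of the cone over `T` and of the interior of its negative, which
are respectively the points of `t • T` for `0 ≤ t` and those of the interior for `t < 0`. -/
def signedSlice (t : ℤ) : Set (ℤ × ℤ) :=
  {x | (∀ i, 0 ≤ C.coord i (x, t)) ∨ ∀ i, C.coord i (x, t) < 0}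

/-- The first two vertices of `T` relative to the remaining one, scaled to be lattice vectors. -/
def edge (i : Fin 2) : ℤ × ℤ := C.vertex i.succ - C.vertex 0

/-- The normalized area of `scale • T`, that is, twice the Euclidean one. -/
noncomputable def area : ℕ := ((Module.Basis.finTwoProd ℤ).det C.edge).natAbs

/-- The linear part of the barycentric coordinates dual to the edges. -/
def edgeCoord (i : Fin 2) : ℤ × ℤ →+ ℝ := (C.coord i.succ).comp (AddMonoidHom.inl (ℤ × ℤ) ℤ)

lemma coord_sub_vertex (i j : Fin 3) (x : ℤ × ℤ) (t : ℤ) :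
    C.coord i (x - C.vertex j, t) =
      C.coord i (x, t + C.scale) - if i = j then (C.scale : ℝ) else 0 := by
  rw [← C.isScaledDual, ← map_sub]
  simp

lemma coord_succ_eq_edgeCoord_add (i : Fin 2) (x : ℤ × ℤ) (t : ℤ) :
    C.coord i.succ (x, t) = C.edgeCoord i x + C.coord i.succ (0, t) := by
  rw [edgeCoord, AddMonoidHom.comp_apply, AddMonoidHom.inl_apply, ← map_add]
  simp

lemma isScaledDual_edge : IsScaledDual C.edgeCoord C.edge (C.scale : ℝ) := fun i j ↦ by
  have hdual (k : Fin 3) := C.isScaledDual i.succ k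
  calc C.edgeCoord i (C.edge j)
      = C.coord i.succ ((C.vertex j.succ, (C.scale : ℤ)) - (C.vertex 0, (C.scale : ℤ))) := by
        rw [Prod.mk_sub_mk, sub_self]
        rfl
    _ = if i = j then (C.scale : ℝ) else 0 := by
        rw [map_sub, hdual, hdual, if_neg (Fin.succ_ne_zero i), sub_zero]
        simp only [Fin.succ_inj]

lemma cast_scale_pos : (0 : ℝ) < C.scale := by exact_mod_cast C.scale_pos

lemma abs_coord_le_of_mem_signedSlice {x : ℤ × ℤ} {t : ℤ} (hx : x ∈ C.signedSlice t) (i : Fin 3) :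
    |C.coord i (x, t)| ≤ |(t : ℝ)| := by
  have hsum : ∑ i, C.coord i (x, t) = t := C.sum_coord (x, t)
  rcases hx with hx | hx
  · rw [abs_of_nonneg (hx i), ← hsum]
    exact (Finset.single_le_sum (fun j _ ↦ hx j) (Finset.mem_univ i)).trans (le_abs_self _)
  · rw [abs_of_neg (hx i), ← hsum, ← abs_neg, ← Finset.sum_neg_distrib]
    exact (Finset.single_le_sum (f := fun j ↦ -C.coord j (x, t))
      (fun j _ ↦ (neg_pos.2 (hx j)).le) (Finset.mem_univ i)).trans (le_abs_self _)

lemma finite_signedSlice (t : ℤ) : (C.signedSlice t).Finite := by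
  refine (C.isScaledDual_edge.finite_setOf_abs_le C.cast_scale_pos (.finTwoProd ℤ)
    (fun i ↦ C.coord i.succ (0, t)) |(t : ℝ)|).subset fun x hx i ↦ ?_
  rw [← coord_succ_eq_edgeCoord_add]
  exact C.abs_coord_le_of_mem_signedSlice hx i.succ

/-- The lattice points at level `t` of the half-open parallelogram spanned by the edges. -/
def halfOpenSlice (t : ℤ) : Set (ℤ × ℤ) :=
  {x | ∀ i : Fin 2, C.coord i.succ (x, t) ∈ Ico 0 (C.scale : ℝ)}

lemma halfOpenSlice_eq (t : ℤ) : C.halfOpenSlice t =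
    {x | ∀ i, C.edgeCoord i x + C.coord i.succ (0, t) ∈ Ico 0 (C.scale : ℝ)} :=
  Set.ext fun x ↦ forall_congr' fun i ↦ by rw [coord_succ_eq_edgeCoord_add]

lemma finite_halfOpenSlice (t : ℤ) : (C.halfOpenSlice t).Finite := by
  rw [halfOpenSlice_eq]
  exact C.isScaledDual_edge.finite_halfOpenBox C.cast_scale_pos (.finTwoProd ℤ) _

lemma ncard_halfOpenSlice (t : ℤ) : (C.halfOpenSlice t).ncard = C.area := by
  rw [halfOpenSlice_eq]
  exact C.isScaledDual_edge.ncard_halfOpenBox C.cast_scale_pos (.finTwoProd ℤ) _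

-- Whatever the sign of `a`, the function `[0 ≤ a, b, c] + [a, b, c < 0]` has the mixed difference
-- `[0 ≤ b, c < N]` in `b` and `c`.
theorem ncard_signedSlice_add_two_mul_scale (t : ℤ) :
    (C.signedSlice (t + 2 * C.scale)).ncard + (C.signedSlice t).ncard =
      2 * (C.signedSlice (t + C.scale)).ncard + C.area := by
  set S := C.signedSlice (t + 2 * C.scale) with hS
  set S₁ := C.vertex 1 +ᵥ C.signedSlice (t + C.scale) with hS₁
  set S₂ := C.vertex 2 +ᵥ C.signedSlice (t + C.scale) with hS₂
  set S₁₂ := C.vertex 1 +ᵥ C.vertex 2 +ᵥ C.signedSlice t with hS₁₂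
  set P := C.halfOpenSlice (t + 2 * C.scale) with hP
  have hmem (x : ℤ × ℤ) : (x ∈ S ∪ S₁₂ ↔ x ∈ S₁ ∪ S₂ ∪ P) ∧ (x ∈ S ∩ S₁₂ ↔ x ∈ S₁ ∩ S₂) ∧
      ¬ (x ∈ S₁ ∪ S₂ ∧ x ∈ P) := by
    have hN := C.cast_scale_pos
    simp only [hS, hS₁, hS₂, hS₁₂, hP, signedSlice, halfOpenSlice, mem_union, mem_inter_iff,
      mem_vadd_set_iff_neg_vadd_mem, vadd_eq_add, neg_add_eq_sub, mem_ofPred_eq, coord_sub_vertex,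
      two_mul, add_assoc, Fin.forall_fin_succ, mem_Ico, Fin.succ_zero_eq_one, Fin.succ_one_eq_two,
      IsEmpty.forall_iff, and_true, zero_ne_one, Fin.reduceEq, if_true, if_false, sub_zero]
    generalize C.coord 0 _ = a, C.coord 1 _ = b, C.coord 2 _ = c
    grind
  have hunion : S ∪ S₁₂ = S₁ ∪ S₂ ∪ P := Set.ext fun x ↦ (hmem x).1
  have hinter : S ∩ S₁₂ = S₁ ∩ S₂ := Set.ext fun x ↦ (hmem x).2.1
  have hdisj : Disjoint (S₁ ∪ S₂) P :=
    disjoint_left.2 fun x hx hx' ↦ (hmem x).2.2 ⟨hx, hx'⟩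
  have fin₁ : S₁.Finite := (C.finite_signedSlice _).vadd_set
  have fin₂ : S₂.Finite := (C.finite_signedSlice _).vadd_set
  have fin₁₂ : S₁₂.Finite := (C.finite_signedSlice _).vadd_set.vadd_set
  calc S.ncard + (C.signedSlice t).ncard
      = S.ncard + S₁₂.ncard := by rw [ncard_vadd_set, ncard_vadd_set]
    _ = (S₁ ∪ S₂ ∪ P).ncard + (S₁ ∩ S₂).ncard := by
        rw [← ncard_union_add_ncard_inter _ _ (C.finite_signedSlice _) fin₁₂, hunion, hinter]
    _ = (S₁ ∪ S₂).ncard + (S₁ ∩ S₂).ncard + C.area := by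
        rw [ncard_union_eq hdisj (fin₁.union fin₂) (C.finite_halfOpenSlice _),
          C.ncard_halfOpenSlice, add_right_comm]
    _ = 2 * (C.signedSlice (t + C.scale)).ncard + C.area := by
        rw [ncard_union_add_ncard_inter _ _ fin₁ fin₂, ncard_vadd_set, ncard_vadd_set, two_mul]

section Slices

variable {C} {t : ℤ}

lemma openSlice_subset_closedSlice : C.openSlice t ⊆ C.closedSlice t := fun _ hx i ↦ (hx i).le

lemma signedSlice_of_nonneg (ht : 0 ≤ t) : C.signedSlice t = C.closedSlice t := by
  refine Subset.antisymm (fun x hx ↦ hx.resolve_right fun hneg ↦ ?_) fun x hx ↦ .inl hx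
  have hsum : ∑ i, C.coord i (x, t) = t := C.sum_coord (x, t)
  have : ∑ i, C.coord i (x, t) < 0 :=
    Finset.sum_neg (fun i _ ↦ hneg i) Finset.univ_nonempty
  rw [hsum] at this
  exact absurd this (by exact_mod_cast ht.not_gt)

lemma signedSlice_neg (ht : 0 < t) : C.signedSlice (-t) = -C.openSlice t := by
  have hcoord (x : ℤ × ℤ) (i : Fin 3) : C.coord i (x, -t) = -C.coord i (-x, t) := by
    rw [← map_neg, Prod.neg_mk, neg_neg]
  ext x
  simp only [signedSlice, openSlice, mem_neg, mem_ofPred_eq, hcoord, neg_neg_iff_pos,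
    Left.nonneg_neg_iff, or_iff_right_iff_imp]
  intro hneg
  have hsum : ∑ i, C.coord i (-x, t) = t := C.sum_coord (-x, t)
  have : ∑ i, C.coord i (-x, t) ≤ 0 := Finset.sum_nonpos fun i _ ↦ hneg i
  rw [hsum] at this
  exact absurd this (by exact_mod_cast ht.not_ge)

lemma signedSlice_zero : C.signedSlice 0 = {0} := by
  rw [signedSlice_of_nonneg le_rfl]
  refine Subset.antisymm (fun x hx ↦ ?_) ?_
  · have hcoord (i : Fin 3) : C.coord i (x, 0) = 0 :=
      (Finset.sum_eq_zero_iff_of_nonneg fun i _ ↦ hx i).1 (by simpa using C.sum_coord (x, 0)) i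
        (Finset.mem_univ i)
    exact C.isScaledDual_edge.eq_zero_of_forall_eq_zero C.cast_scale_pos (.finTwoProd ℤ)
      fun i ↦ hcoord i.succ
  · rintro _ rfl i
    exact (map_zero (C.coord i)).ge

lemma finite_closedSlice (ht : 0 ≤ t) : (C.closedSlice t).Finite :=
  signedSlice_of_nonneg ht ▸ C.finite_signedSlice t

lemma ncard_openSlice (ht : 0 < t) : (C.openSlice t).ncard = (C.signedSlice (-t)).ncard := by
  rw [signedSlice_neg ht, ncard_neg]

end Slices

section Pseudointegral

open Polynomial

variable {C} {c : ℚ[X]}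

theorem ncard_signedSlice_of_eval (hc : ∀ t : ℕ, 0 < t → (C.closedSlice t).ncard = c.eval (t : ℚ))
    (hint : (C.openSlice 1).ncard = 1) (t : ℤ) :
    ((C.signedSlice t).ncard : ℚ) = C.area / (2 * C.scale ^ 2) * (t * (t + 1)) + 1 := by
  obtain ⟨B, D, hBD⟩ := exists_eq_quadratic_of_eval_of_second_difference
    (F := fun t ↦ ((C.signedSlice t).ncard : ℚ)) (K := (C.area : ℚ)) (c := c) C.scale_pos
    (fun t ↦ by
      have := C.ncard_signedSlice_add_two_mul_scale t
      qify at this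
      linear_combination this)
    (fun t ht ↦ by rw [signedSlice_of_nonneg (by positivity), hc t ht])
  have at_zero := hBD 0
  have at_neg_one := hBD (-1)
  rw [signedSlice_zero, ncard_singleton] at at_zero
  rw [← ncard_openSlice one_pos, hint] at at_neg_one
  push_cast at at_zero at_neg_one
  rw [hBD t]
  linear_combination (t + 1) * (-at_zero) + t * at_neg_one

theorem ncard_openSlice_succ (hc : ∀ t : ℕ, 0 < t → (C.closedSlice t).ncard = c.eval (t : ℚ))
    (hint : (C.openSlice 1).ncard = 1) (t : ℕ) :
    (C.openSlice (t + 1)).ncard = (C.closedSlice t).ncard := by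
  rw [ncard_openSlice (by positivity), ← signedSlice_of_nonneg (by positivity),
    ← Nat.cast_inj (R := ℚ), ncard_signedSlice_of_eval hc hint, ncard_signedSlice_of_eval hc hint]
  push_cast
  ring

theorem ncard_boundary_mul_scale_sq
    (hc : ∀ t : ℕ, 0 < t → (C.closedSlice t).ncard = c.eval (t : ℚ))
    (hint : (C.openSlice 1).ncard = 1) :
    (C.closedSlice 1 \ C.openSlice 1).ncard * C.scale ^ 2 = C.area := by
  have hN : (C.scale : ℚ) ≠ 0 := by exact_mod_cast C.scale_pos.ne'
  have hclosed := ncard_signedSlice_of_eval hc hint 1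
  rw [signedSlice_of_nonneg zero_le_one, ← ncard_sdiff_add_ncard_of_subset
    openSlice_subset_closedSlice (finite_closedSlice zero_le_one), hint] at hclosed
  field_simp at hclosed
  push_cast at hclosed
  qify
  linear_combination hclosed / 2

end Pseudointegral

/-- `u` is the least interior lattice point of the cone, for the order defined by the coordinates.
The semigroup ring of the cone is Gorenstein when such a point exists. -/
def IsLeastInterior (u : (ℤ × ℤ) × ℤ) : Prop :=
  (∀ i, 0 < C.coord i u) ∧ ∀ v, (∀ i, 0 < C.coord i v) → ∀ i, C.coord i u ≤ C.coord i v

theorem isLeastInterior_of_ncard_openSlice_succ {z : ℤ × ℤ} (hz : z ∈ C.openSlice 1)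
    (h : ∀ t : ℕ, (C.openSlice (t + 1)).ncard = (C.closedSlice t).ncard) :
    C.IsLeastInterior (z, 1) := by
  have translate (t : ℕ) : z +ᵥ C.closedSlice t = C.openSlice (t + 1) := by
    refine eq_of_subset_of_ncard_le ?_ (by rw [h, ncard_vadd_set])
      ((finite_closedSlice (by positivity)).subset openSlice_subset_closedSlice)
    rintro _ ⟨x, hx, rfl⟩ i
    have : (z +ᵥ x, (t : ℤ) + 1) = (z, 1) + (x, (t : ℤ)) := by simp [add_comm]
    rw [this, map_add]
    exact add_pos_of_pos_of_nonneg (hz i) (hx i)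
  refine ⟨hz, fun v hv ↦ ?_⟩
  have hlevel : (0 : ℝ) < v.2 :=
    C.sum_coord v ▸ Finset.sum_pos (fun i _ ↦ hv i) Finset.univ_nonempty
  obtain ⟨t, ht⟩ : ∃ t : ℕ, v.2 = t + 1 := by
    have : 0 < v.2 := by exact_mod_cast hlevel
    exact ⟨(v.2 - 1).toNat, by omega⟩
  have hmem : v.1 ∈ C.openSlice (t + 1) := by rwa [openSlice, ← ht]
  obtain ⟨x, hx, hxv⟩ := translate t ▸ hmem
  have : v = (z, 1) + (x, (t : ℤ)) := by
    ext <;> simp [← hxv, ht, add_comm]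
  intro i
  rw [this, map_add]
  exact le_add_of_nonneg_right (hx i)

namespace IsLeastInterior

variable {C} {u : (ℤ × ℤ) × ℤ}

lemma coord_le_of_pos (hu : C.IsLeastInterior u) {i : Fin 3} {w : (ℤ × ℤ) × ℤ}
    (hw : 0 < C.coord i w) : C.coord i u ≤ C.coord i w := by
  -- Moving far along the edges of the cone in the facet opposite to vertex `i` leaves `coord i`
  -- unchanged.
  obtain ⟨n, hn⟩ := exists_nat_gt (∑ j, |C.coord j w|)
  set k : Fin 3 → ℤ := fun j ↦ if j = i then 0 else n
  set w' := w + ∑ l, k l • (C.vertex l, (C.scale : ℤ)) with hw'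
  have hcoord (j : Fin 3) : C.coord j w' = C.coord j w + k j * C.scale := by
    rw [hw', map_add, C.isScaledDual.apply_sum_zsmul]
  have hpos (j : Fin 3) : 0 < C.coord j w' := by
    rw [hcoord]
    by_cases hj : j = i
    · simpa [k, hj] using hw
    · have hN : (1 : ℝ) ≤ C.scale := by exact_mod_cast C.scale_pos
      have hle : |C.coord j w| ≤ ∑ j, |C.coord j w| :=
        Finset.single_le_sum (fun j _ ↦ abs_nonneg (C.coord j w)) (Finset.mem_univ j)
      have hnN : (n : ℝ) ≤ n * C.scale := le_mul_of_one_le_right n.cast_nonneg hN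
      simp only [k, hj, if_false, Int.cast_natCast]
      linarith [neg_abs_le (C.coord j w)]
  simpa [hcoord, k] using hu.2 w' hpos i

theorem exists_coord_eq_mul (hu : C.IsLeastInterior u) (i : Fin 3) (v : (ℤ × ℤ) × ℤ) :
    ∃ m : ℤ, C.coord i v = m * C.coord i u := by
  have hleast : IsLeast {g | g ∈ (C.coord i).range ∧ 0 < g} (C.coord i u) := by
    refine ⟨⟨⟨u, rfl⟩, hu.1 i⟩, ?_⟩
    rintro _ ⟨⟨w, rfl⟩, hw⟩
    exact hu.coord_le_of_pos hw
  have hmem : C.coord i v ∈ (C.coord i).range := ⟨v, rfl⟩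
  rw [AddSubgroup.cyclic_of_min hleast, AddSubgroup.mem_closure_singleton] at hmem
  obtain ⟨m, hm⟩ := hmem
  exact ⟨m, by rw [← hm, zsmul_eq_mul]⟩

end IsLeastInterior

/-- The gradient of the `i`-th barycentric coordinate. -/
def gradient (i : Fin 3) : ℝ × ℝ := (C.coord i ((1, 0), 0), C.coord i ((0, 1), 0))

lemma sum_gradient : ∑ i, C.gradient i = 0 := by
  ext
  · simpa [gradient, Prod.fst_sum] using C.sum_coord ((1, 0), 0)
  · simpa [gradient, Prod.snd_sum] using C.sum_coord ((0, 1), 0)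

lemma cross_gradient_one_two :
    cross (C.gradient 1) (C.gradient 2) = cross (C.gradient 0) (C.gradient 1) :=
  (cross_eq_cross_of_add_eq_zero (Fin.sum_univ_three C.gradient ▸ C.sum_gradient)).symm

lemma cross_gradient_two_zero :
    cross (C.gradient 2) (C.gradient 0) = cross (C.gradient 0) (C.gradient 1) := by
  rw [← cross_gradient_one_two]
  refine (cross_eq_cross_of_add_eq_zero ?_).symm
  rw [← C.sum_gradient, Fin.sum_univ_three, add_rotate, add_rotate]

lemma abs_cross_gradient_mul_area :
    |cross (C.gradient 0) (C.gradient 1)| * C.area = (C.scale : ℝ) ^ 2 := by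
  have hdet := C.isScaledDual_edge.det_mul_det (.finTwoProd ℤ)
  have hcross : (Matrix.of fun i k ↦ C.edgeCoord i (Module.Basis.finTwoProd ℤ k)).det =
      cross (C.gradient 1) (C.gradient 2) := by
    simp [Matrix.det_fin_two, cross, gradient, edgeCoord]
  rw [hcross, cross_gradient_one_two, Fintype.card_fin] at hdet
  rw [area, Nat.cast_natAbs, Int.cast_abs, ← abs_mul, hdet, abs_of_nonneg (by positivity)]

lemma abs_cross_gradient_mul_eq_one {b : ℕ} (hb : b * C.scale ^ 2 = C.area) :
    |cross (C.gradient 0) (C.gradient 1)| * b = 1 := by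
  have harea := C.abs_cross_gradient_mul_area
  rw [← hb, Nat.cast_mul, Nat.cast_pow] at harea
  exact mul_right_cancel₀ (pow_pos C.cast_scale_pos 2).ne' (by linear_combination harea)

namespace IsLeastInterior

variable {C} {u : (ℤ × ℤ) × ℤ}

lemma exists_abs_cross_gradient_eq (hu : C.IsLeastInterior u) (i j : Fin 3) :
    ∃ d : ℕ, |cross (C.gradient i) (C.gradient j)| = C.coord i u * C.coord j u * d := by
  choose m hm using hu.exists_coord_eq_mul
  set μ : Fin 3 → ℤ × ℤ := fun i ↦ (m i ((1, 0), 0), m i ((0, 1), 0)) with hμ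
  refine ⟨(cross (μ i) (μ j)).natAbs, ?_⟩
  have hcross : cross (C.gradient i) (C.gradient j) =
      C.coord i u * C.coord j u * cross (μ i) (μ j) := by
    simp only [cross, gradient, hm _ ((_, _), 0), hμ]
    push_cast
    ring
  rw [hcross, abs_mul, abs_of_pos (mul_pos (hu.1 i) (hu.1 j)), Nat.cast_natAbs, Int.cast_abs]

theorem exists_sq_add_eq_mul (hu : C.IsLeastInterior u) (hu₂ : u.2 = 1) {b : ℕ}
    (hb : b * C.scale ^ 2 = C.area) :
    ∃ x y z : ℕ, 0 < x ∧ 0 < y ∧ 0 < z ∧ (x + y + z) ^ 2 = b * (x * y * z) := by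
  obtain ⟨x, hx⟩ := hu.exists_abs_cross_gradient_eq 0 1
  obtain ⟨y, hy⟩ := hu.exists_abs_cross_gradient_eq 1 2
  obtain ⟨z, hz⟩ := hu.exists_abs_cross_gradient_eq 2 0
  rw [cross_gradient_one_two] at hy
  rw [cross_gradient_two_zero] at hz
  have hδ := C.abs_cross_gradient_mul_eq_one hb
  have hsum := C.sum_coord u
  rw [Fin.sum_univ_three, hu₂, Int.cast_one] at hsum
  set δ := |cross (C.gradient 0) (C.gradient 1)|
  set p := C.coord 0 u
  set q := C.coord 1 u
  set r := C.coord 2 u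
  have hpqr : p * q * r ≠ 0 := (mul_pos (mul_pos (hu.1 0) (hu.1 1)) (hu.1 2)).ne'
  have hδ₀ : δ ≠ 0 := left_ne_zero_of_mul_eq_one hδ
  have pos_of_eq {a : ℝ} {n : ℕ} (h : δ = a * n) : 0 < n :=
    Nat.cast_pos.1 ((right_ne_zero_of_mul (h ▸ hδ₀)).symm.lt_of_le n.cast_nonneg)
  refine ⟨x, y, z, pos_of_eq hx, pos_of_eq hy, pos_of_eq hz, ?_⟩
  have hadd : p * q * r * (x + y + z) = δ := by
    linear_combination (-r) * hx - p * hy - q * hz + δ * hsum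
  have hmul : (p * q * r) ^ 2 * (x * y * z) = δ ^ 3 := by
    calc (p * q * r) ^ 2 * (x * y * z) = (p * q * x) * (q * r * y) * (r * p * z) := by ring
      _ = δ ^ 3 := by rw [← hx, ← hy, ← hz]; ring
  have : ((x + y + z : ℕ) : ℝ) ^ 2 = b * (x * y * z) := by
    refine mul_left_cancel₀ (pow_ne_zero 2 hpqr) ?_
    push_cast
    calc (p * q * r) ^ 2 * (x + y + z : ℝ) ^ 2 = δ ^ 2 * (δ * b) := by
          rw [← mul_pow, hadd, hδ, mul_one]
      _ = (p * q * r) ^ 2 * (b * (x * y * z)) := by linear_combination (-b) * hmul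
  exact_mod_cast this

end IsLeastInterior

open Polynomial in
theorem ncard_boundary_bounds {c : ℚ[X]}
    (hc : ∀ t : ℕ, 0 < t → (C.closedSlice t).ncard = c.eval (t : ℚ))
    (hint : (C.openSlice 1).ncard = 1) :
    1 ≤ (C.closedSlice 1 \ C.openSlice 1).ncard ∧ (C.closedSlice 1 \ C.openSlice 1).ncard ≤ 9 ∧
      (C.closedSlice 1 \ C.openSlice 1).ncard ≠ 7 := by
  obtain ⟨z, hz⟩ := ncard_eq_one.1 hint
  have hu := C.isLeastInterior_of_ncard_openSlice_succ (hz ▸ mem_singleton z)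
    (ncard_openSlice_succ hc hint)
  obtain ⟨x, y, w, hx, hy, hw, h⟩ :=
    hu.exists_sq_add_eq_mul rfl (ncard_boundary_mul_scale_sq hc hint)
  exact one_le_and_le_nine_and_ne_seven_of_sq_add_eq_mul hx hy hw h

end TriangleCone

/-! ### Triangles in the plane -/

section Geometry

/-- The embedding of `ℤ²` in the real plane. -/
def intPt : ℤ × ℤ →+ ℝ × ℝ := (Int.castAddHom ℝ).prodMap (Int.castAddHom ℝ)

lemma intPt_injective : Function.Injective intPt :=
  Int.cast_injective.prodMap Int.cast_injective

lemma ncard_inter_latticePts (S : Set (ℝ × ℝ)) : (S ∩ latticePts).ncard = (intPt ⁻¹' S).ncard := by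
  have hrange : latticePts = range intPt := by
    ext ⟨x, y⟩
    simp [latticePts, intPt, Prod.ext_iff, eq_comm]
  rw [hrange, ← image_preimage_eq_inter_range, ncard_image_of_injective _ intPt_injective]

lemma exists_common_denominator {ι : Type*} [Finite ι] (f : ι → ℚ) :
    ∃ N : ℕ, 0 < N ∧ ∀ i, ∃ m : ℤ, N * f i = m := by
  have := Fintype.ofFinite ι
  refine ⟨∏ i, (f i).den, Finset.prod_pos fun i _ ↦ (f i).den_pos, fun i ↦ ?_⟩
  obtain ⟨k, hk⟩ := Finset.dvd_prod_of_mem (fun i ↦ (f i).den) (Finset.mem_univ i)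
  refine ⟨k * (f i).num, ?_⟩
  rw [hk]
  push_cast
  rw [← Rat.mul_den_eq_num]
  ring

lemma exists_scale_smul_qpt_eq_intPt {ι : Type*} [Finite ι] (f : ι → ℚ × ℚ) :
    ∃ N : ℕ, 0 < N ∧ ∃ v : ι → ℤ × ℤ, ∀ i, (N : ℝ) • qpt (f i) = intPt (v i) := by
  obtain ⟨N, hN, h⟩ := exists_common_denominator
    (Sum.elim (fun i ↦ (f i).1) (fun i ↦ (f i).2) : ι ⊕ ι → ℚ)
  choose m hm using h
  refine ⟨N, hN, fun i ↦ (m (.inl i), m (.inr i)), fun i ↦ Prod.ext ?_ ?_⟩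
  · simpa [qpt, intPt] using congrArg (Rat.cast (K := ℝ)) (hm (.inl i))
  · simpa [qpt, intPt] using congrArg (Rat.cast (K := ℝ)) (hm (.inr i))

/-- The homogenization of the barycentric coordinate `b.coord i`, on the lattice. -/
noncomputable def homogeneousCoord {ι : Type*} (b : AffineBasis ι ℝ (ℝ × ℝ)) (i : ι) :
    (ℤ × ℤ) × ℤ →+ ℝ :=
  ((b.coord i).linear.toAddMonoidHom.comp intPt).coprod
    ((AddMonoidHom.mulRight (b.coord i 0)).comp (Int.castAddHom ℝ))

lemma homogeneousCoord_apply {ι : Type*} (b : AffineBasis ι ℝ (ℝ × ℝ)) (i : ι)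
    {t : ℤ} (ht : t ≠ 0) (x : ℤ × ℤ) :
    homogeneousCoord b i (x, t) = t * b.coord i ((t : ℝ)⁻¹ • intPt x) := by
  have ht' : (t : ℝ) ≠ 0 := Int.cast_ne_zero.2 ht
  have hdecomp := congrFun (b.coord i).decomp ((t : ℝ)⁻¹ • intPt x)
  rw [hdecomp, Pi.add_apply, map_smul, smul_eq_mul, mul_add, mul_inv_cancel_left₀ ht']
  rfl

lemma sum_homogeneousCoord {ι : Type*} [Fintype ι] (b : AffineBasis ι ℝ (ℝ × ℝ))
    (v : (ℤ × ℤ) × ℤ) : ∑ i, homogeneousCoord b i v = v.2 := by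
  have hlinear (y : ℝ × ℝ) : ∑ i, (b.coord i).linear y = 0 := by
    have h (i : ι) : (b.coord i).linear y = b.coord i y - b.coord i 0 := by
      rw [AffineMap.decomp', Pi.sub_apply]
    simp only [h, Finset.sum_sub_distrib, b.sum_coord_apply_eq_one, sub_self]
  calc ∑ i, homogeneousCoord b i v
      = ∑ i, (b.coord i).linear (intPt v.1) + v.2 * ∑ i, b.coord i 0 := by
        rw [Finset.mul_sum, ← Finset.sum_add_distrib]
        rfl
    _ = v.2 := by rw [hlinear, b.sum_coord_apply_eq_one, mul_one, zero_add]

namespace TriangleCone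

/-- The cone over the triangle whose vertices are the points of `b`. -/
noncomputable def ofAffineBasis (b : AffineBasis (Fin 3) ℝ (ℝ × ℝ)) {N : ℕ} (hN : 0 < N)
    (v : Fin 3 → ℤ × ℤ) (hv : ∀ i, (N : ℝ) • b i = intPt (v i)) : TriangleCone where
  coord := homogeneousCoord b
  sum_coord := sum_homogeneousCoord b
  scale := N
  scale_pos := hN
  vertex := v
  isScaledDual i j := by
    have hN' : (N : ℝ) ≠ 0 := by positivity
    rw [homogeneousCoord_apply b i (by positivity), ← hv, Int.cast_natCast,
      inv_smul_smul₀ hN', b.coord_apply, mul_ite, mul_one, mul_zero]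

end TriangleCone

theorem IsRatTriangle.exists_triangleCone {T : Set (ℝ × ℝ)} (hT : IsRatTriangle T) :
    ∃ C : TriangleCone, (∀ t : ℕ, 0 < t → intPt ⁻¹' ((t : ℝ) • T) = C.closedSlice t) ∧
      intPt ⁻¹' interior T = C.openSlice 1 := by
  obtain ⟨p, q, r, hcol, rfl⟩ := hT
  have hind : AffineIndependent ℝ ![qpt p, qpt q, qpt r] :=
    affineIndependent_iff_not_collinear_set.2 hcol
  have hspan : affineSpan ℝ (range ![qpt p, qpt q, qpt r]) = ⊤ :=
    hind.affineSpan_eq_top_iff_card_eq_finrank_add_one.2 (by simp)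
  set b : AffineBasis (Fin 3) ℝ (ℝ × ℝ) := ⟨_, hind, hspan⟩
  have hb : (b : Fin 3 → ℝ × ℝ) = fun i ↦ qpt (![p, q, r] i) := by
    ext i : 1
    fin_cases i <;> rfl
  have hrange : ({qpt p, qpt q, qpt r} : Set (ℝ × ℝ)) = range b := by
    change _ = range ![qpt p, qpt q, qpt r]
    simp only [Matrix.range_cons, Matrix.range_empty, union_empty, singleton_union]
  obtain ⟨N, hN, v, hv⟩ := exists_scale_smul_qpt_eq_intPt ![p, q, r]
  refine ⟨.ofAffineBasis b hN v fun i ↦ by rw [hb, hv], fun t ht ↦ ?_, ?_⟩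
  · ext x
    have ht' : (0 : ℝ) < t := by positivity
    rw [mem_preimage, mem_smul_set_iff_inv_smul_mem₀ ht'.ne', hrange, b.convexHull_eq_nonneg_coord]
    refine forall_congr' fun i ↦ ?_
    change _ ↔ 0 ≤ homogeneousCoord b i (x, t)
    rw [homogeneousCoord_apply b i (by positivity), Int.cast_natCast,
      mul_nonneg_iff_of_pos_left ht']
  · ext x
    rw [mem_preimage, hrange, b.interior_convexHull]
    refine forall_congr' fun i ↦ ?_
    change _ ↔ 0 < homogeneousCoord b i (x, 1)
    rw [homogeneousCoord_apply b i one_ne_zero]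
    simp

lemma IsRatTriangle.isClosed {T : Set (ℝ × ℝ)} (hT : IsRatTriangle T) : IsClosed T := by
  obtain ⟨p, q, r, -, rfl⟩ := hT
  exact (toFinite _).isClosed_convexHull ℝ

end Geometry

/-- a rational pseudointegral triangle with exactly one interior
lattice point has b boundary lattice points with 1 ≤ b ≤ 9 and b ≠ 7. -/
theorem stmt_6 (T : Set (ℝ × ℝ)) (hT : IsRatTriangle T) (hPIP : IsPIP T)
    (hint : (interior T ∩ latticePts).ncard = 1) :
    1 ≤ (frontier T ∩ latticePts).ncard ∧ (frontier T ∩ latticePts).ncard ≤ 9 ∧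
      (frontier T ∩ latticePts).ncard ≠ 7 := by
  obtain ⟨C, hclosed, hopen⟩ := hT.exists_triangleCone
  obtain ⟨c, hc⟩ := hPIP
  have hfrontier : intPt ⁻¹' frontier T = C.closedSlice 1 \ C.openSlice 1 := by
    have hT₁ := hclosed 1 one_pos
    rw [Nat.cast_one, Nat.cast_one, one_smul] at hT₁
    rw [hT.isClosed.frontier_eq, preimage_sdiff, hT₁, hopen]
  rw [ncard_inter_latticePts, hopen] at hint
  rw [ncard_inter_latticePts, hfrontier]
  refine C.ncard_boundary_bounds (c := c) (fun t ht ↦ ?_) hint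
  rw [← hclosed t ht, ← ncard_inter_latticePts]
  exact hc t ht
end

section
/- For every positive integer j, the triangle T_j := conv{(−3F_{2j−1}/F_{2j+1}, 3F_{2j−1}/F_{2j+1} − 1), (0, −1), (3F_{2j+1}/F_{2j−1}, −1)} ⊂ ℝ² is pseudointegral, contains exactly one lattice point in its interior, and has exactly 9 lattice points on its boundary. -/
open Set Pointwise

/-!
Shear the plane by `p = x + y`, `q = y`. With `a = F_{2j-1}` and `b = F_{2j+1}`, the identity
`a² + b² + 1 = 3ab` says that `T_j` is the triangle `-1 ≤ p`, `-1 ≤ q`, `a²p + b²q ≤ 1`.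
If `d = F_{2j-3}`, then `bd = a² + 1`, and a piecewise linear bijection of the lattice (a mutation),
equal to the identity where `dp + bq ≤ 0` and to a shear fixing the line `dp + bq = 0` elsewhere,
carries the lattice points of `t T_j` onto those of `t T_{j-1}`. Descending to `F_{-1} = F_1 = 1`
leaves a standard triangle of side `3t`, with `(3t+2).choose 2` lattice points. The origin is the
only interior lattice point, and the remaining `10 - 1` lattice points of `T_j` are on its boundary.
-/

section Mutation

variable {R M : Type*} [CommRing R] [LinearOrder R] [AddCommGroup M] [Module R M]

/-- The mutation along `v` with respect to a linear form `f` vanishing at `v`: the piecewise linear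
bijection that is the identity where `f ≤ 0` and the transvection `z ↦ z + f z • v` where
`0 ≤ f`. -/
def mutation (f : M →ₗ[R] R) (v : M) (hv : f v = 0) : M ≃ M where
  toFun z := z + max (f z) 0 • v
  invFun z := z - max (f z) 0 • v
  left_inv z := by simp [hv]
  right_inv z := by simp [hv]

end Mutation

section CornerTriangle

variable {R : Type*} [CommRing R] [LinearOrder R]

/-- The triangle `-t ≤ p`, `-t ≤ q`, `u p + v q ≤ t`, where `p = x + y` and `q = y`. It is defined
over any ordered ring so that its lattice points are the same triangle over `ℤ`. -/
def cornerTriangle (u v t : R) : Set (R × R) :=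
  {z | -t ≤ z.1 + z.2 ∧ -t ≤ z.2 ∧ u * (z.1 + z.2) + v * z.2 ≤ t}

/-- The mutation that exchanges two corner triangles. In the coordinates `p = x + y`, `q = y` its
linear form is `d p + b q` and its direction is `(-b, d)`. -/
def cornerMutation (b d : R) : R × R ≃ R × R :=
  mutation (d • LinearMap.fst R R R + (b + d) • LinearMap.snd R R R) (-(b + d), d)
    (show d * -(b + d) + (b + d) * d = 0 by ring)

variable [IsStrictOrderedRing R]

lemma cornerMutation_mem_cornerTriangle_iff {b d t : R} (hb : 0 ≤ b) (hd : 0 ≤ d) (z : R × R) :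
    cornerMutation b d z ∈ cornerTriangle (d ^ 2) (b * d - 1) t ↔
      z ∈ cornerTriangle (b * d - 1) (b ^ 2) t := by
  obtain ⟨x, y⟩ := z
  set l := d * x + (b + d) * y with hl
  have domain_form : (b * d - 1) * (x + y) + b ^ 2 * y = b * l - (x + y) := by rw [hl]; ring
  have codomain_form (m : R) :
      d ^ 2 * (x - (b + d) * m + (y + d * m)) + (b * d - 1) * (y + d * m) =
        d * (l - m) - y := by rw [hl]; ring
  have apply_eq : cornerMutation b d (x, y) = (x - (b + d) * max l 0, y + d * max l 0) :=
    Prod.ext (show x + max l 0 * -(b + d) = _ by ring) (show y + max l 0 * d = _ by ring)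
  rw [apply_eq]
  simp only [cornerTriangle, Set.mem_ofPred_eq, domain_form, codomain_form]
  rcases le_total l 0 with hl0 | hl0
  · have hbl := mul_nonpos_of_nonneg_of_nonpos hb hl0
    have hdl := mul_nonpos_of_nonneg_of_nonpos hd hl0
    rw [max_eq_right hl0]
    constructor <;> rintro ⟨hp, hq, -⟩ <;> refine ⟨?_, ?_, ?_⟩ <;> linarith
  · have hbl := mul_nonneg hb hl0
    have hdl := mul_nonneg hd hl0
    rw [max_eq_left hl0]
    constructor <;> rintro ⟨hp, hq, hr⟩ <;> refine ⟨?_, ?_, ?_⟩ <;> linarith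

lemma ncard_cornerTriangle_mutation {b d : R} (t : R) (hb : 0 ≤ b) (hd : 0 ≤ d) :
    (cornerTriangle (b * d - 1) (b ^ 2) t).ncard =
      (cornerTriangle (d ^ 2) (b * d - 1) t).ncard :=
  Set.ncard_congr (fun z _ ↦ cornerMutation b d z)
    (fun z hz ↦ (cornerMutation_mem_cornerTriangle_iff hb hd z).2 hz)
    (fun _ _ _ _ h ↦ (cornerMutation b d).injective h)
    (fun w hw ↦ ⟨(cornerMutation b d).symm w,
      (cornerMutation_mem_cornerTriangle_iff hb hd _).1 (by simpa using hw), by simp⟩)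

end CornerTriangle

section Fibonacci

lemma fib_two_mul_sub_one_pos (j : ℤ) : 0 < Int.fib (2 * j - 1) := by
  rw [show 2 * j - 1 = 2 * (j - 1) + 1 by ring]
  exact Int.fib_two_mul_add_one_pos

lemma fib_mul_fib_sub_one (j : ℤ) :
    Int.fib (2 * j + 3) * Int.fib (2 * j - 1) - 1 = Int.fib (2 * j + 1) ^ 2 := by
  have catalan := Int.fib_add_sq_sub_fib_mul_fib_add_two_mul (2 * j - 1) 2
  have odd : Odd (2 * j - 1).natAbs := Int.natAbs_odd.2 ⟨j - 1, by ring⟩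
  rw [odd.neg_one_pow, Int.fib_two, show 2 * j - 1 + 2 = 2 * j + 1 by ring,
    show 2 * j - 1 + 2 * 2 = 2 * j + 3 by ring] at catalan
  linarith

lemma fib_sq_add_fib_sq_add_one (j : ℤ) :
    Int.fib (2 * j - 1) ^ 2 + Int.fib (2 * j + 1) ^ 2 + 1 =
      3 * Int.fib (2 * j - 1) * Int.fib (2 * j + 1) := by
  have recurrence : Int.fib (2 * j + 3) = 3 * Int.fib (2 * j + 1) - Int.fib (2 * j - 1) := by
    grind [Int.fib_add_two (2 * j - 1), Int.fib_add_two (2 * j), Int.fib_add_two (2 * j + 1)]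
  have catalan := fib_mul_fib_sub_one j
  rw [recurrence] at catalan
  linarith

end Fibonacci

section Counting

lemma ncard_setOf_add_le (n : ℕ) : {z : ℕ × ℕ | z.1 + z.2 ≤ n}.ncard = (n + 2).choose 2 := by
  have eq_biUnion : {z : ℕ × ℕ | z.1 + z.2 ≤ n} =
      ((Finset.range (n + 1)).biUnion Finset.HasAntidiagonal.antidiagonal : Finset (ℕ × ℕ)) := by
    ext z
    simp
  have disjoint : ((Finset.range (n + 1) : Finset ℕ) : Set ℕ).PairwiseDisjoint
      (Finset.HasAntidiagonal.antidiagonal : ℕ → Finset (ℕ × ℕ)) := by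
    intro i _ k _ hik
    refine Finset.disjoint_left.2 fun z hzi hzk ↦ hik ?_
    rw [← Finset.HasAntidiagonal.mem_antidiagonal.1 hzi,
      Finset.HasAntidiagonal.mem_antidiagonal.1 hzk]
  rw [eq_biUnion, Set.ncard_coe_finset, Finset.card_biUnion disjoint]
  simpa using Nat.sum_range_add_choose n 1

lemma ncard_cornerTriangle_one_one (t : ℕ) :
    (cornerTriangle (1 : ℤ) 1 t).ncard = (3 * t + 2).choose 2 := by
  rw [← ncard_setOf_add_le]
  refine (Set.ncard_congr (fun z _ ↦ ((z.1 : ℤ) - z.2, (z.2 : ℤ) - t)) ?_ ?_ ?_).symm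
  · rintro ⟨i, k⟩ hz
    simp only [cornerTriangle, Set.mem_ofPred_eq] at hz ⊢
    omega
  · rintro ⟨i, k⟩ ⟨i', k'⟩ _ _ h
    simp only [Prod.mk.injEq] at h ⊢
    omega
  · rintro ⟨x, y⟩ hz
    simp only [cornerTriangle, Set.mem_ofPred_eq] at hz
    refine ⟨((x + y + t).toNat, (y + t).toNat), ?_, ?_⟩ <;>
      simp only [Set.mem_ofPred_eq, Prod.mk.injEq] <;> omega

lemma ncard_cornerTriangle_fib (j t : ℕ) :
    (cornerTriangle (Int.fib (2 * j - 1) ^ 2) (Int.fib (2 * j + 1) ^ 2) (t : ℤ)).ncard =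
      (3 * t + 2).choose 2 := by
  induction j with
  | zero => simpa using ncard_cornerTriangle_one_one t
  | succ j ih =>
    have hb : 0 ≤ Int.fib (2 * j + 3) := by
      simpa [mul_add, add_assoc] using (Int.fib_two_mul_add_one_pos (n := j + 1)).le
    have hd : 0 ≤ Int.fib (2 * j - 1) := (fib_two_mul_sub_one_pos j).le
    rw [← fib_mul_fib_sub_one, ← ncard_cornerTriangle_mutation _ hb hd, fib_mul_fib_sub_one] at ih
    rw [← ih]
    push_cast
    congr 4; ring

end Counting

section ConvexHull

variable {K : Type*} [Field K] [LinearOrder K] [IsStrictOrderedRing K]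

lemma smul_add_smul_add_smul_mem_convexHull {E : Type*} [AddCommGroup E] [Module K E] {a b c : K}
    (ha : 0 ≤ a) (hb : 0 ≤ b) (hc : 0 ≤ c) (habc : a + b + c = 1) (x y z : E) :
    a • x + b • y + c • z ∈ convexHull K {x, y, z} := by
  have h := (convex_convexHull K ({x, y, z} : Set E)).sum_mem (t := Finset.univ)
    (w := ![a, b, c]) (z := ![x, y, z])
    (by simp [Fin.forall_fin_succ, ha, hb, hc]) (by simpa [Fin.sum_univ_three] using habc)
    (fun i _ ↦ subset_convexHull K _ (by fin_cases i <;> simp))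
  simpa [Fin.sum_univ_three] using h

lemma convex_cornerTriangle (u v t : K) : Convex K (cornerTriangle u v t) := by
  have h_fst_add_snd : IsLinearMap K fun z : K × K ↦ z.1 + z.2 :=
    (LinearMap.fst K K K + LinearMap.snd K K K).isLinear
  have h_snd : IsLinearMap K fun z : K × K ↦ z.2 := (LinearMap.snd K K K).isLinear
  have h_weighted : IsLinearMap K fun z : K × K ↦ u * (z.1 + z.2) + v * z.2 :=
    (u • (LinearMap.fst K K K + LinearMap.snd K K K) + v • LinearMap.snd K K K).isLinear
  exact (convex_halfSpace_ge h_fst_add_snd _).inter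
    ((convex_halfSpace_ge h_snd _).inter (convex_halfSpace_le h_weighted _))

lemma convexHull_eq_cornerTriangle {u v : K} (hu : 0 < u) (hv : 0 < v) :
    convexHull K {(-(1 + u + v) / v, (1 + u) / v), ((0 : K), (-1 : K)), ((1 + u + v) / u, -1)} =
      cornerTriangle u v 1 := by
  apply Set.Subset.antisymm
  · refine convexHull_min ?_ (convex_cornerTriangle u v 1)
    have h₁ : 0 < (1 + u) / v := by positivity
    have h₂ : 0 < (1 + u + v) / u := by positivity
    rintro z (rfl | rfl | rfl)
    · have hp : -(1 + u + v) / v + (1 + u) / v = -1 := by field_simp; ring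
      have hq : v * ((1 + u) / v) = 1 + u := by field_simp
      refine ⟨hp.ge, ?_, ?_⟩ <;> simp only [hp, hq] <;> linarith
    · refine ⟨?_, ?_, ?_⟩ <;> simp only <;> linarith
    · have hp : u * ((1 + u + v) / u + -1) = 1 + v := by field_simp; ring
      refine ⟨?_, ?_, ?_⟩ <;> simp only [hp] <;> linarith
  · rintro ⟨x, y⟩ ⟨hp, hq, hr⟩
    simp only at hp hq hr
    have hs : 0 < 1 + u + v := by positivity
    have h_mem := smul_add_smul_add_smul_mem_convexHull
      (a := (y + 1) * v / (1 + u + v)) (b := (1 - (u * (x + y) + v * y)) / (1 + u + v))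
      (c := (x + y + 1) * u / (1 + u + v))
      (div_nonneg (mul_nonneg (by linarith) hv.le) hs.le) (div_nonneg (by linarith) hs.le)
      (div_nonneg (mul_nonneg (by linarith) hu.le) hs.le) (by field_simp; ring)
      (-(1 + u + v) / v, (1 + u) / v) ((0 : K), (-1 : K)) ((1 + u + v) / u, -1)
    convert h_mem using 1
    simp only [Prod.smul_mk, Prod.mk_add_mk, smul_eq_mul, Prod.mk.injEq]
    constructor <;> field_simp <;> ring

lemma convexHull_eq_cornerTriangle_sq {a b : K} (ha : 0 < a) (hb : 0 < b)
    (h : a ^ 2 + b ^ 2 + 1 = 3 * a * b) :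
    convexHull K {(-(3 * a) / b, 3 * a / b - 1), ((0 : K), (-1 : K)), (3 * b / a, -1)} =
      cornerTriangle (a ^ 2) (b ^ 2) 1 := by
  have hs : 1 + a ^ 2 + b ^ 2 = 3 * a * b := by linarith
  have h₁ : -(3 * a) / b = -(1 + a ^ 2 + b ^ 2) / b ^ 2 := by rw [hs]; field_simp
  have h₂ : 3 * a / b - 1 = (1 + a ^ 2) / b ^ 2 := by
    rw [eq_sub_of_add_eq hs]; field_simp
  have h₃ : 3 * b / a = (1 + a ^ 2 + b ^ 2) / a ^ 2 := by rw [hs]; field_simp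
  rw [h₁, h₂, h₃, convexHull_eq_cornerTriangle (by positivity) (by positivity)]

lemma convexHull_fib_eq_cornerTriangle {j : ℕ} (hj : 0 < j) :
    convexHull ℝ {(-(3 * (Nat.fib (2 * j - 1) : ℝ)) / (Nat.fib (2 * j + 1) : ℝ),
        3 * (Nat.fib (2 * j - 1) : ℝ) / (Nat.fib (2 * j + 1) : ℝ) - 1), ((0 : ℝ), (-1 : ℝ)),
        (3 * (Nat.fib (2 * j + 1) : ℝ) / (Nat.fib (2 * j - 1) : ℝ), -1)} =
      cornerTriangle ((Int.fib (2 * j - 1) ^ 2 : ℤ) : ℝ) ((Int.fib (2 * j + 1) ^ 2 : ℤ) : ℝ) 1 := by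
  have cast_fib (n : ℕ) : (Nat.fib n : ℝ) = Int.fib n := by rw [Int.fib_natCast, Int.cast_natCast]
  have ha : (0 : ℝ) < Int.fib (2 * j - 1) := Int.cast_pos.2 (fib_two_mul_sub_one_pos j)
  have hb : (0 : ℝ) < Int.fib (2 * j + 1) := Int.cast_pos.2 Int.fib_two_mul_add_one_pos
  rw [cast_fib, cast_fib, show ((2 * j - 1 : ℕ) : ℤ) = 2 * j - 1 by omega,
    show ((2 * j + 1 : ℕ) : ℤ) = 2 * j + 1 by omega, Int.cast_pow, Int.cast_pow,
    convexHull_eq_cornerTriangle_sq ha hb (by exact_mod_cast fib_sq_add_fib_sq_add_one j)]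

end ConvexHull

section LatticePoints

lemma smul_cornerTriangle {K : Type*} [Field K] [LinearOrder K] [IsStrictOrderedRing K] {c : K}
    (hc : 0 < c) (u v t : K) : c • cornerTriangle u v t = cornerTriangle u v (c * t) := by
  ext ⟨x, y⟩
  have hp : c⁻¹ * x + c⁻¹ * y = c⁻¹ * (x + y) := by ring
  have hr : u * (c⁻¹ * (x + y)) + v * (c⁻¹ * y) = c⁻¹ * (u * (x + y) + v * y) := by ring
  simp only [Set.mem_smul_set_iff_inv_smul_mem₀ hc.ne', cornerTriangle, Set.mem_ofPred_eq,
    Prod.smul_mk, smul_eq_mul, hp, hr, le_inv_mul_iff₀ hc, inv_mul_le_iff₀ hc, mul_neg]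

lemma ncard_cornerTriangle_inter_latticePts (u v t : ℤ) :
    (cornerTriangle (u : ℝ) v t ∩ latticePts).ncard = (cornerTriangle u v t).ncard := by
  have mem_iff (m n : ℤ) :
      ((m : ℝ), (n : ℝ)) ∈ cornerTriangle (u : ℝ) v t ↔ (m, n) ∈ cornerTriangle u v t := by
    simp only [cornerTriangle, Set.mem_ofPred_eq]
    norm_cast
  refine (Set.ncard_congr (fun z _ ↦ ((z.1 : ℝ), (z.2 : ℝ))) ?_ ?_ ?_).symm
  · rintro ⟨m, n⟩ hz
    exact ⟨(mem_iff m n).2 hz, m, n, rfl⟩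
  · rintro ⟨m, n⟩ ⟨m', n'⟩ _ _ h
    simpa using h
  · rintro _ ⟨hz, m, n, rfl⟩
    exact ⟨(m, n), (mem_iff m n).1 hz, rfl⟩

lemma ehr_cornerTriangle (u v : ℤ) {t : ℕ} (ht : 0 < t) :
    ehr (cornerTriangle (u : ℝ) v 1) t = (cornerTriangle u v t).ncard := by
  rw [ehr, smul_cornerTriangle (by exact_mod_cast ht), mul_one,
    ← ncard_cornerTriangle_inter_latticePts, Int.cast_natCast]

lemma ehr_one (P : Set (ℝ × ℝ)) : ehr P 1 = (P ∩ latticePts).ncard := by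
  rw [ehr, Nat.cast_one, one_smul]

lemma isPIP_of_ehr_eq_choose {P : Set (ℝ × ℝ)} {m n k : ℕ}
    (h : ∀ t : ℕ, 0 < t → ehr P t = (m * t + n).choose k) : IsPIP P := by
  refine ⟨Polynomial.C (k.factorial : ℚ)⁻¹ *
    (descPochhammer ℚ k).comp (Polynomial.C (m : ℚ) * Polynomial.X + Polynomial.C (n : ℚ)),
    fun t ht ↦ ?_⟩
  rw [h t ht, Nat.cast_choose_eq_descPochhammer_div]
  simp [div_eq_inv_mul]

lemma interior_cornerTriangle {u v : ℝ} (huv : u ≠ 0 ∨ v ≠ 0) (t : ℝ) :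
    interior (cornerTriangle u v t) =
      {z | -t < z.1 + z.2 ∧ -t < z.2 ∧ u * (z.1 + z.2) + v * z.2 < t} := by
  let p : StrongDual ℝ (ℝ × ℝ) := .fst ℝ ℝ ℝ + .snd ℝ ℝ ℝ
  let q : StrongDual ℝ (ℝ × ℝ) := .snd ℝ ℝ ℝ
  have hp : Function.Surjective p := fun c ↦ ⟨(c, 0), by simp [p]⟩
  have hq : Function.Surjective q := fun c ↦ ⟨(0, c), by simp [q]⟩
  have hr : Function.Surjective (u • p + v • q) := by
    rcases huv with hu | hv
    · exact fun c ↦ ⟨(c / u, 0), by simp [p, q, mul_div_cancel₀, hu]⟩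
    · exact fun c ↦ ⟨(-(c / v), c / v), by simp [p, q, mul_div_cancel₀, hv]⟩
  have eq_preimage : cornerTriangle u v t =
      p ⁻¹' Set.Ici (-t) ∩ (q ⁻¹' Set.Ici (-t) ∩ (u • p + v • q) ⁻¹' Set.Iic t) := rfl
  rw [eq_preimage, interior_inter, interior_inter, p.interior_preimage hp, q.interior_preimage hq,
    (u • p + v • q).interior_preimage hr, interior_Ici, interior_Iic]
  rfl

lemma interior_cornerTriangle_inter_latticePts {u v : ℤ} (hu : 0 < u) (hv : 0 < v) :
    interior (cornerTriangle (u : ℝ) v 1) ∩ latticePts = {0} := by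
  rw [interior_cornerTriangle (.inl (by exact_mod_cast hu.ne'))]
  apply Set.Subset.antisymm
  · rintro _ ⟨⟨hp, hq, hr⟩, m, n, rfl⟩
    simp only at hp hq hr
    norm_cast at hp hq hr
    have hp₀ : 0 ≤ m + n := by omega
    have hq₀ : 0 ≤ n := by omega
    have hp_le : m + n ≤ u * (m + n) := le_mul_of_one_le_left hp₀ hu
    have hq_le : n ≤ v * n := le_mul_of_one_le_left hq₀ hv
    obtain ⟨rfl, rfl⟩ : m = 0 ∧ n = 0 := by omega
    simp
  · rintro _ rfl
    exact ⟨by norm_num, 0, 0, Prod.ext Int.cast_zero.symm Int.cast_zero.symm⟩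

lemma ncard_frontier_inter {X : Type*} [TopologicalSpace X] {P L : Set X} (hP : IsClosed P)
    (hL : (interior P ∩ L).Finite) :
    (frontier P ∩ L).ncard = (P ∩ L).ncard - (interior P ∩ L).ncard := by
  rw [hP.frontier_eq, ← Set.ncard_sdiff (Set.inter_subset_inter_left _ interior_subset) hL]
  congr 1
  grind

end LatticePoints

/-- for every positive integer j, the triangle
T_j := conv{(−3F_{2j−1}/F_{2j+1}, 3F_{2j−1}/F_{2j+1} − 1), (0, −1),
(3F_{2j+1}/F_{2j−1}, −1)} is pseudointegral, has exactly one interior lattice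
point, and has exactly 9 boundary lattice points. -/
theorem stmt_8 (j : ℕ) (hj : 0 < j)
    (T : Set (ℝ × ℝ))
    (hT : T = convexHull ℝ
      ({(-(3 * (Nat.fib (2 * j - 1) : ℝ)) / (Nat.fib (2 * j + 1) : ℝ),
          3 * (Nat.fib (2 * j - 1) : ℝ) / (Nat.fib (2 * j + 1) : ℝ) - 1),
        ((0 : ℝ), (-1 : ℝ)),
        (3 * (Nat.fib (2 * j + 1) : ℝ) / (Nat.fib (2 * j - 1) : ℝ), (-1 : ℝ))} :
        Set (ℝ × ℝ))) :
    IsPIP T ∧ (interior T ∩ latticePts).ncard = 1 ∧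
      (frontier T ∩ latticePts).ncard = 9 := by
  have hclosed : IsClosed T := hT ▸ (Set.toFinite _).isClosed_convexHull ℝ
  rw [convexHull_fib_eq_cornerTriangle hj] at hT
  have hehr (t : ℕ) (ht : 0 < t) : ehr T t = (3 * t + 2).choose 2 := by
    rw [hT, ehr_cornerTriangle _ _ ht, ncard_cornerTriangle_fib]
  have hinterior : interior T ∩ latticePts = {0} := by
    rw [hT, interior_cornerTriangle_inter_latticePts (pow_pos (fib_two_mul_sub_one_pos j) 2)
      (pow_pos Int.fib_two_mul_add_one_pos 2)]
  have hfrontier : (frontier T ∩ latticePts).ncard = 9 := by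
    rw [ncard_frontier_inter hclosed (hinterior ▸ Set.finite_singleton 0), ← ehr_one,
      hehr 1 one_pos, hinterior, Set.ncard_singleton]
    rfl
  exact ⟨isPIP_of_ehr_eq_choose hehr, by rw [hinterior, Set.ncard_singleton], hfrontier⟩
end

section
/- For all positive integers i and b with b ≤ 5i + 4, there exists a rational convex polygon P ⊂ ℝ² that is pseudointegral, has exactly i lattice points in its interior, and has exactly b lattice points on its boundary. -/
open Set Pointwise

/-- A rational convex polygon: the convex hull of a finite set of rational
points, with nonempty interior in ℝ². -/
def IsRatPolygon (P : Set (ℝ × ℝ)) : Prop :=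
  ∃ V : Finset (ℚ × ℚ), P = convexHull ℝ (qpt '' (V : Set (ℚ × ℚ))) ∧
    (interior P).Nonempty

/-!
Both polygons have their left side on the line `x = (y - 2) / 4`. Hence row `n` of the
`t`-th dilate starts at `-⌊(2t - n) / 4⌋`, and these floors add up to the polynomial `t (t - 1) / 2`
over all rows `0 ≤ n ≤ 2t`. For `b = 1` the polygon is a triangle that reaches up to `y = 2`; the
right end of a row is the same floor plus a linear form in `n` and `t`, which changes at `n = t`.
For `b ≥ 2` it is a pentagon that stops at `y = 6 / 5`; its right sides have integer slopes, but
two of their endpoints lie at the heights `1 / 5` and `6 / 5`, and the resulting dependence on `t`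
modulo `5` is exactly the sum of the floors missing from the rows between `6t / 5` and `2t`.
In both cases the interior lattice points are those with `y = 1` and `0 ≤ x < i`, and the
remaining lattice points of the polygon itself lie on its boundary.
-/

/-- The linear form `(x, y) ↦ a x + b y`. -/
noncomputable def linForm (a b : ℝ) : ℝ × ℝ →L[ℝ] ℝ :=
  a • ContinuousLinearMap.fst ℝ ℝ ℝ + b • ContinuousLinearMap.snd ℝ ℝ ℝ

lemma linForm_apply (a b : ℝ) (p : ℝ × ℝ) : linForm a b p = a * p.1 + b * p.2 := rfl

lemma linForm_surjective {a b : ℝ} (h : a ≠ 0 ∨ b ≠ 0) : Function.Surjective (linForm a b) := by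
  intro z
  rcases h with ha | hb
  · exact ⟨(z / a, 0), by simp [linForm_apply, mul_div_cancel₀ z ha]⟩
  · exact ⟨(0, z / b), by simp [linForm_apply, mul_div_cancel₀ z hb]⟩

/-- The polyhedron cut out by the half-planes `a x + b y ≤ c`, where `(a, b, c)` runs through a
finite set of integer triples, its sides. -/
def polyhedron (H : Finset (ℤ × ℤ × ℤ)) : Set (ℝ × ℝ) :=
  ⋂ h ∈ H, linForm h.1 h.2.1 ⁻¹' Iic (h.2.2 : ℝ)

lemma mem_polyhedron {H : Finset (ℤ × ℤ × ℤ)} {p : ℝ × ℝ} :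
    p ∈ polyhedron H ↔ ∀ h ∈ H, (h.1 : ℝ) * p.1 + h.2.1 * p.2 ≤ h.2.2 := by
  simp only [polyhedron, mem_iInter₂, mem_preimage, mem_Iic, linForm_apply]

lemma convex_polyhedron (H : Finset (ℤ × ℤ × ℤ)) : Convex ℝ (polyhedron H) :=
  convex_iInter₂ fun h _ => (convex_Iic (h.2.2 : ℝ)).linear_preimage (linForm h.1 h.2.1).toLinearMap

lemma isClosed_polyhedron (H : Finset (ℤ × ℤ × ℤ)) : IsClosed (polyhedron H) :=
  isClosed_iInter fun h => isClosed_iInter fun _ =>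
    isClosed_Iic.preimage (linForm h.1 h.2.1).continuous

lemma interior_polyhedron {H : Finset (ℤ × ℤ × ℤ)} (hH : ∀ h ∈ H, h.1 ≠ 0 ∨ h.2.1 ≠ 0) :
    interior (polyhedron H) = ⋂ h ∈ H, linForm h.1 h.2.1 ⁻¹' Iio (h.2.2 : ℝ) := by
  refine (H.finite_toSet.interior_biInter _).trans (iInter₂_congr fun h hh => ?_)
  have hne : (h.1 : ℝ) ≠ 0 ∨ (h.2.1 : ℝ) ≠ 0 := by exact_mod_cast hH h hh
  rw [ContinuousLinearMap.interior_preimage _ (linForm_surjective hne), interior_Iic]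

lemma intCast_mem_interior_polyhedron {H : Finset (ℤ × ℤ × ℤ)}
    (hH : ∀ h ∈ H, h.1 ≠ 0 ∨ h.2.1 ≠ 0) (m n : ℤ) :
    ((m : ℝ), (n : ℝ)) ∈ interior (polyhedron H) ↔ ∀ h ∈ H, h.1 * m + h.2.1 * n < h.2.2 := by
  rw [interior_polyhedron hH]
  simp only [mem_iInter₂, mem_preimage, mem_Iio, linForm_apply]
  exact_mod_cast Iff.rfl

lemma intCast_mem_smul_polyhedron (H : Finset (ℤ × ℤ × ℤ)) {t : ℕ} (ht : 0 < t) (m n : ℤ) :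
    ((m : ℝ), (n : ℝ)) ∈ (t : ℝ) • polyhedron H ↔
      ∀ h ∈ H, h.1 * m + h.2.1 * n ≤ h.2.2 * t := by
  have ht' : (0 : ℝ) < t := by exact_mod_cast ht
  rw [mem_smul_set_iff_inv_smul_mem₀ ht'.ne', mem_polyhedron]
  refine forall₂_congr fun h _ => ?_
  have hscale : (h.1 : ℝ) * ((t : ℝ)⁻¹ * m) + h.2.1 * ((t : ℝ)⁻¹ * n)
      = (h.1 * m + h.2.1 * n) / t := by ring
  simp only [Prod.smul_mk, smul_eq_mul, hscale]
  rw [div_le_iff₀ ht']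
  exact_mod_cast Iff.rfl

lemma mem_of_affineMap_mem {E : Type*} [AddCommGroup E] [Module ℝ E] {S : Set E}
    (hS : Convex ℝ S) (f : ℝ →ᵃ[ℝ] E) {u v w : ℝ} (hu : f u ∈ S) (hw : f w ∈ S)
    (huv : u ≤ v) (hvw : v ≤ w) : f v ∈ S :=
  (hS.affine_preimage f).ordConnected.out hu hw ⟨huv, hvw⟩

lemma mem_of_row_mem {S : Set (ℝ × ℝ)} (hS : Convex ℝ S) {x₁ x₂ x y : ℝ}
    (h₁ : (x₁, y) ∈ S) (h₂ : (x₂, y) ∈ S) (hx₁ : x₁ ≤ x) (hx₂ : x ≤ x₂) : (x, y) ∈ S :=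
  mem_of_affineMap_mem hS ((AffineMap.id ℝ ℝ).prod (AffineMap.const ℝ ℝ y)) h₁ h₂ hx₁ hx₂

lemma mem_of_line_mem {S : Set (ℝ × ℝ)} (hS : Convex ℝ S) {a c y₁ y₂ y : ℝ}
    (h₁ : (a + c * y₁, y₁) ∈ S) (h₂ : (a + c * y₂, y₂) ∈ S) (hy₁ : y₁ ≤ y) (hy₂ : y ≤ y₂) :
    (a + c * y, y) ∈ S :=
  mem_of_affineMap_mem hS
    ((AffineMap.const ℝ ℝ a + c • AffineMap.id ℝ ℝ).prod (AffineMap.id ℝ ℝ)) h₁ h₂ hy₁ hy₂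

lemma qpt_mem_polyhedron {H : Finset (ℤ × ℤ × ℤ)} {v : ℚ × ℚ} :
    qpt v ∈ polyhedron H ↔ ∀ h ∈ H, (h.1 : ℚ) * v.1 + h.2.1 * v.2 ≤ h.2.2 := by
  rw [mem_polyhedron]
  exact forall₂_congr fun h _ => by simp only [qpt]; exact_mod_cast Iff.rfl

lemma polyhedron_eq_convexHull {H : Finset (ℤ × ℤ × ℤ)} {V : Finset (ℚ × ℚ)}
    (hVH : ∀ v ∈ V, qpt v ∈ polyhedron H)
    (hHV : ∀ S : Set (ℝ × ℝ), Convex ℝ S → (∀ v ∈ V, qpt v ∈ S) → polyhedron H ⊆ S) :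
    polyhedron H = convexHull ℝ (qpt '' (V : Set (ℚ × ℚ))) :=
  (hHV _ (convex_convexHull ℝ _) fun _ hv => subset_convexHull ℝ _ (mem_image_of_mem qpt hv))
    |>.antisymm (convexHull_min (image_subset_iff.2 hVH) (convex_polyhedron H))

lemma ncard_inter_latticePts_eq_sum_rows {Q : Set (ℝ × ℝ)} {s : Finset ℤ} {lo hi : ℤ → ℤ}
    (hQ : ∀ m n : ℤ, ((m : ℝ), (n : ℝ)) ∈ Q ↔ n ∈ s ∧ lo n ≤ m ∧ m ≤ hi n)
    (hle : ∀ n ∈ s, lo n ≤ hi n + 1) :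
    ((Q ∩ latticePts).ncard : ℤ) = ∑ n ∈ s, (hi n + 1 - lo n) := by
  let rows : Finset (Σ _ : ℤ, ℤ) := s.sigma fun n => Finset.Icc (lo n) (hi n)
  let toPlane : (Σ _ : ℤ, ℤ) → ℝ × ℝ := fun p => (p.2, p.1)
  have hinj : Function.Injective toPlane := by
    rintro ⟨n, m⟩ ⟨n', m'⟩ h
    simp_all [toPlane]
  have himage : Q ∩ latticePts = toPlane '' rows := by
    ext p
    constructor
    · rintro ⟨hp, m, n, rfl⟩
      exact ⟨⟨n, m⟩, by simpa [rows] using (hQ m n).1 hp, rfl⟩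
    · rintro ⟨⟨n, m⟩, hmn, rfl⟩
      exact ⟨(hQ m n).2 (by simpa [rows] using hmn), m, n, rfl⟩
  rw [himage, ncard_image_of_injective _ hinj, ncard_coe_finset, Finset.card_sigma, Nat.cast_sum]
  refine Finset.sum_congr rfl fun n hn => ?_
  rw [Int.card_Icc_of_le _ _ (hle n hn)]

lemma ncard_interior_of_single_row {P : Set (ℝ × ℝ)} {i : ℤ} (hi : 0 < i)
    (hP : ∀ m n : ℤ, ((m : ℝ), (n : ℝ)) ∈ interior P ↔ n = 1 ∧ 0 ≤ m ∧ m ≤ i - 1) :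
    (interior P ∩ latticePts).ncard = i := by
  have hcount := ncard_inter_latticePts_eq_sum_rows (Q := interior P) (s := {1})
    (lo := fun _ => 0) (hi := fun _ => i - 1) (by simpa using hP) (by lia)
  simpa using hcount

lemma isPIP_of_two_mul_ehr_eq {P : Set (ℝ × ℝ)} {a b c : ℤ}
    (hP : ∀ t : ℕ, 0 < t → 2 * (ehr P t : ℤ) = a * t ^ 2 + b * t + c) : IsPIP P := by
  refine ⟨.C (a / 2 : ℚ) * .X ^ 2 + .C (b / 2 : ℚ) * .X + .C (c / 2 : ℚ), fun t ht => ?_⟩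
  have h : 2 * (ehr P t : ℚ) = a * t ^ 2 + b * t + c := by exact_mod_cast hP t ht
  simp only [Polynomial.eval_add, Polynomial.eval_mul, Polynomial.eval_C, Polynomial.eval_pow,
    Polynomial.eval_X]
  linarith

lemma ncard_frontier_add_ncard_interior {P : Set (ℝ × ℝ)} (hP : IsClosed P)
    (hfin : (P ∩ latticePts).Finite) :
    (frontier P ∩ latticePts).ncard + (interior P ∩ latticePts).ncard = ehr P 1 := by
  have hfrontier : frontier P ∩ latticePts = (P ∩ latticePts) \ (interior P ∩ latticePts) := by
    rw [hP.frontier_eq, inter_sdiff_distrib_right]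
  rw [hfrontier, ncard_sdiff_add_ncard_of_subset (inter_subset_inter_left _ interior_subset) hfin]
  simp [ehr]

/-- The Ehrhart polynomial of a lattice polygon with `i` interior and `b` boundary lattice points
is `((2i + b - 2) t² + b t + 2) / 2`, by Pick's theorem; this predicate records that a set has the
same Ehrhart function, with the denominator cleared. -/
def HasPickEhrhart (P : Set (ℝ × ℝ)) (i b : ℤ) : Prop :=
  ∀ t : ℕ, 0 < t → 2 * (ehr P t : ℤ) = (2 * i + b - 2) * t ^ 2 + b * t + 2

lemma HasPickEhrhart.ncard_frontier {P : Set (ℝ × ℝ)} {i b : ℤ} (h : HasPickEhrhart P i b)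
    (hP : IsClosed P) (hib : 0 < i + b) (hi : (interior P ∩ latticePts).ncard = i) :
    (frontier P ∩ latticePts).ncard = b := by
  have hehr : (ehr P 1 : ℤ) = i + b := by
    have := h 1 one_pos
    push_cast at this
    linarith
  have hfin : (P ∩ latticePts).Finite := by
    have hne : ehr P 1 ≠ 0 := by lia
    simpa [ehr] using finite_of_ncard_ne_zero hne
  have hsum := ncard_frontier_add_ncard_interior hP hfin
  lia

lemma two_mul_sum_range_add_mul {R : Type*} [CommRing R] (a c : R) (N : ℕ) :
    2 * ∑ n ∈ Finset.range N, (a + c * n) = 2 * a * N + c * N * (N - 1) := by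
  induction N with
  | zero => simp
  | succ N ih => rw [Finset.sum_range_succ, mul_add, ih]; push_cast; ring

lemma sum_range_natCast_sub {M : Type*} [AddCommGroup M] (f : ℤ → M) {N k : ℕ} (h : N ≤ k + 1) :
    ∑ n ∈ Finset.range N, f (k - n)
      = ∑ n ∈ Finset.range (k + 1), f n - ∑ n ∈ Finset.range (k + 1 - N), f n := by
  rw [← Finset.sum_Ico_eq_sub _ (Nat.sub_le _ _), Finset.range_eq_Ico]
  have hreflect := Finset.sum_Ico_reflect (fun n : ℕ => f n) 0 h
  rw [Nat.sub_zero] at hreflect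
  rw [← hreflect]
  refine Finset.sum_congr rfl fun n hn => ?_
  rw [Nat.cast_sub (by have := (Finset.mem_Ico.1 hn).2; lia)]

lemma sum_range_add_ediv {q r : ℕ} (hr : r ≤ q) (s : ℕ) :
    ∑ n ∈ Finset.range r, ((q * s + n : ℕ) : ℤ) / q = r * s := by
  have hquot : ∀ n ∈ Finset.range r, ((q * s + n : ℕ) : ℤ) / q = s := fun n hn => by
    have hnq : n < q := (Finset.mem_range.1 hn).trans_le hr
    exact_mod_cast (by rw [Nat.mul_add_div (by omega), Nat.div_eq_of_lt hnq, add_zero] :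
      (q * s + n) / q = s)
  rw [Finset.sum_congr rfl hquot, Finset.sum_const, Finset.card_range, nsmul_eq_mul]

lemma two_mul_sum_range_ediv {q r : ℕ} (hr : r ≤ q) (s : ℕ) :
    2 * ∑ n ∈ Finset.range (q * s + r), (n : ℤ) / q = q * s * (s - 1) + 2 * r * s := by
  have hblocks : 2 * ∑ n ∈ Finset.range (q * s), (n : ℤ) / q = q * s * (s - 1) := by
    induction s with
    | zero => simp
    | succ s ih =>
      rw [Nat.mul_succ, Finset.sum_range_add, mul_add, ih, sum_range_add_ediv le_rfl]
      push_cast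
      ring
  rw [Finset.sum_range_add, mul_add, hblocks, sum_range_add_ediv hr]
  ring

lemma two_mul_sum_range_ediv_four (t : ℕ) :
    2 * ∑ n ∈ Finset.range (2 * t + 1), (n : ℤ) / 4 = t * (t - 1) := by
  obtain ⟨s, rfl | rfl⟩ := t.even_or_odd'
  · have h := two_mul_sum_range_ediv (show 1 ≤ 4 by norm_num) s
    rw [show 2 * (2 * s) + 1 = 4 * s + 1 by ring]
    push_cast at h ⊢
    linarith
  · have h := two_mul_sum_range_ediv (show 3 ≤ 4 by norm_num) s
    rw [show 2 * (2 * s + 1) + 1 = 4 * s + 3 by ring]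
    push_cast at h ⊢
    linarith

lemma two_mul_sum_range_sub_ediv_four {t N : ℕ} (hN : N ≤ 2 * t + 1) :
    2 * ∑ n ∈ Finset.range N, (2 * t - n : ℤ) / 4
      = t * (t - 1) - 2 * ∑ n ∈ Finset.range (2 * t + 1 - N), (n : ℤ) / 4 := by
  have h := sum_range_natCast_sub (fun n : ℤ => n / 4) hN
  push_cast at h
  rw [h, mul_sub, two_mul_sum_range_ediv_four]

lemma ehr_eq_sum_range {P : Set (ℝ × ℝ)} {t N : ℕ} {right : ℤ → ℤ}
    (hP : ∀ m n : ℤ, ((m : ℝ), (n : ℝ)) ∈ (t : ℝ) • P ↔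
      (0 ≤ n ∧ n < N) ∧ -4 * m + n ≤ 2 * t ∧ m ≤ right n)
    (hright : ∀ n : ℤ, 0 ≤ n → n < N → n - 2 * t ≤ 4 * (right n + 1)) :
    (ehr P t : ℤ) = ∑ n ∈ Finset.range N, (right n + 1) + ∑ n ∈ Finset.range N, (2 * t - n : ℤ) / 4
    := by
  have hmem (n : ℤ) : n ∈ (Finset.range N).map Nat.castEmbedding ↔ 0 ≤ n ∧ n < N := by
    simp only [Finset.mem_map, Finset.mem_range, Nat.castEmbedding_apply]
    exact ⟨by lia, fun h => ⟨n.toNat, by lia⟩⟩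
  have hcount := ncard_inter_latticePts_eq_sum_rows (Q := (t : ℝ) • P)
    (s := (Finset.range N).map Nat.castEmbedding) (lo := fun n => -((2 * t - n) / 4)) (hi := right)
    (fun m n => by rw [hP, hmem]; lia)
    (fun n hn => by have := hright n ((hmem n).1 hn).1 ((hmem n).1 hn).2; lia)
  simpa only [ehr, Finset.sum_map, Nat.castEmbedding_apply, sub_neg_eq_add, Finset.sum_add_distrib]
    using hcount

/-- The sides, in the encoding of `polyhedron`, of the triangle with `i` interior lattice points and
one boundary lattice point. -/
def triangleSides (i : ℤ) : Finset (ℤ × ℤ × ℤ) :=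
  {(-4, 1, 2), (4, 1 - 4 * i, -2), (4, 4 * i - 3, 8 * i - 6)}

/-- The vertices of the triangle with sides `triangleSides i`. -/
def triangleVertices (i : ℚ) : Finset (ℚ × ℚ) :=
  {(-1 / 2, 0), (i - 3 / 4, 1), (0, 2)}

/-- The right end of row `n` of the `t`-th dilate of the triangle with sides `triangleSides i`:
the largest integer `m` for which `(m, n)` satisfies the two right-hand inequalities. -/
def triangleRight (i t n : ℤ) : ℤ :=
  (2 * t - n) / 4 + min (i * n - t) ((i - 1) * (2 * t - n))

section Triangle

variable {i : ℤ} (hi : 0 < i)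
include hi

lemma triangle_subset_of_convex {S : Set (ℝ × ℝ)} (hS : Convex ℝ S)
    (hV : ∀ v ∈ triangleVertices i, qpt v ∈ S) : polyhedron (triangleSides i) ⊆ S := by
  rintro ⟨x, y⟩ hxy
  simp only [mem_polyhedron, triangleSides, Finset.mem_insert, Finset.mem_singleton,
    forall_eq_or_imp, forall_eq] at hxy
  simp only [qpt, triangleVertices, Finset.mem_insert, Finset.mem_singleton,
    forall_eq_or_imp, forall_eq] at hV
  push_cast at hxy hV
  obtain ⟨hleft, hlower, hupper⟩ := hxy
  obtain ⟨hbottom, hright, htop⟩ := hV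
  have hi' : (1 : ℝ) ≤ i := by exact_mod_cast hi
  have hy0 : 0 ≤ y := by nlinarith
  have hy2 : y ≤ 2 := by nlinarith
  have hl : (-1 / 2 + 1 / 4 * y, y) ∈ S :=
    mem_of_line_mem hS (by convert hbottom using 2; ring) (by convert htop using 2; ring) hy0 hy2
  obtain hy | hy := le_total y 1
  · have hr : (-1 / 2 + (i - 1 / 4) * y, y) ∈ S :=
      mem_of_line_mem hS (by convert hbottom using 2; ring) (by convert hright using 2; ring) hy0 hy
    exact mem_of_row_mem hS hl hr (by linarith) (by linarith)
  · have hr : (2 * (i - 3 / 4) + -(i - 3 / 4) * y, y) ∈ S :=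
      mem_of_line_mem hS (by convert hright using 2; ring) (by convert htop using 2; ring) hy hy2
    exact mem_of_row_mem hS hl hr (by linarith) (by linarith)

lemma triangle_eq_convexHull :
    polyhedron (triangleSides i) = convexHull ℝ (qpt '' (triangleVertices i : Set (ℚ × ℚ))) := by
  have hi' : (1 : ℚ) ≤ i := by exact_mod_cast hi
  refine polyhedron_eq_convexHull ?_ fun S => triangle_subset_of_convex hi
  simp only [triangleVertices, triangleSides, qpt_mem_polyhedron, Finset.mem_insert,
    Finset.mem_singleton, forall_eq_or_imp, forall_eq]
  push_cast
  refine ⟨⟨?_, ?_, ?_⟩, ⟨?_, ?_, ?_⟩, ⟨?_, ?_, ?_⟩⟩ <;> linarith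

lemma intCast_mem_interior_triangle (m n : ℤ) :
    ((m : ℝ), (n : ℝ)) ∈ interior (polyhedron (triangleSides i)) ↔ n = 1 ∧ 0 ≤ m ∧ m ≤ i - 1 := by
  rw [intCast_mem_interior_polyhedron (by simp [triangleSides])]
  simp only [triangleSides, Finset.mem_insert, Finset.mem_singleton, forall_eq_or_imp, forall_eq]
  constructor
  · rintro ⟨hleft, hlower, hupper⟩
    have hn0 : 0 < n := by nlinarith
    have hn2 : n < 2 := by nlinarith
    obtain rfl : n = 1 := by lia
    lia
  · rintro ⟨rfl, hm, hmi⟩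
    lia

lemma intCast_mem_smul_triangle {t : ℕ} (ht : 0 < t) (m n : ℤ) :
    ((m : ℝ), (n : ℝ)) ∈ (t : ℝ) • polyhedron (triangleSides i) ↔
      (0 ≤ n ∧ n < (2 * t + 1 : ℕ)) ∧ -4 * m + n ≤ 2 * t ∧ m ≤ triangleRight i t n := by
  rw [intCast_mem_smul_polyhedron _ ht, triangleRight, ← sub_le_iff_le_add', le_min_iff]
  simp only [triangleSides, Finset.mem_insert, Finset.mem_singleton, forall_eq_or_imp, forall_eq]
  constructor
  · rintro ⟨hleft, hlower, hupper⟩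
    have hn0 : 0 ≤ n := by nlinarith
    have hn2 : n ≤ 2 * t := by nlinarith
    lia
  · lia

lemma triangleRight_of_le {t n : ℤ} (hn : n ≤ t) :
    triangleRight i t n = (2 * t - n) / 4 + (i * n - t) := by
  rw [triangleRight, min_eq_left (by nlinarith)]

lemma triangleRight_of_ge {t n : ℤ} (hn : t ≤ n) :
    triangleRight i t n = (2 * t - n) / 4 + (i - 1) * (2 * t - n) := by
  rw [triangleRight, min_eq_right (by nlinarith)]

lemma left_le_triangleRight_add_one {t n : ℤ} (hn0 : 0 ≤ n) (hn : n ≤ 2 * t) :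
    n - 2 * t ≤ 4 * (triangleRight i t n + 1) := by
  obtain h | h := le_total n t
  · have : n ≤ i * n := le_mul_of_one_le_left hn0 hi
    rw [triangleRight_of_le hi h]
    lia
  · have : 0 ≤ (i - 1) * (2 * t - n) := mul_nonneg (by lia) (by lia)
    rw [triangleRight_of_ge hi h]
    lia

lemma two_mul_sum_triangleRight (t : ℕ) :
    2 * ∑ n ∈ Finset.range (2 * t + 1), (triangleRight i t n + 1)
      = 2 * ∑ n ∈ Finset.range (2 * t + 1), (2 * t - n : ℤ) / 4
        + ((2 * i - 3) * t ^ 2 + 3 * t + 2) := by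
  have hlower : ∀ n ∈ Finset.range t, triangleRight i t n - (2 * t - n) / 4 + 1
      = (1 - t) + i * n := fun n hn => by
    rw [triangleRight_of_le hi (by have := Finset.mem_range.1 hn; lia)]
    ring
  have hupper : ∀ n ∈ Finset.range (t + 1),
      triangleRight i t (t + n : ℕ) - (2 * t - (t + n : ℕ)) / 4 + 1
        = ((i - 1) * t + 1) + (1 - i) * n := fun n _ => by
    rw [triangleRight_of_ge hi (by lia)]
    push_cast
    ring
  have hsum : 2 * ∑ n ∈ Finset.range (2 * t + 1), (triangleRight i t n - (2 * t - n) / 4 + 1)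
      = (2 * i - 3) * t ^ 2 + 3 * t + 2 := by
    rw [show 2 * t + 1 = t + (t + 1) by ring, Finset.sum_range_add, Finset.sum_congr rfl hlower,
      Finset.sum_congr rfl hupper, mul_add, two_mul_sum_range_add_mul, two_mul_sum_range_add_mul]
    push_cast
    ring
  rw [← hsum, ← mul_add, ← Finset.sum_add_distrib]
  exact congrArg _ (Finset.sum_congr rfl fun n _ => by ring)

lemma hasPickEhrhart_triangle : HasPickEhrhart (polyhedron (triangleSides i)) i 1 := by
  intro t ht
  have hfloors := two_mul_sum_range_sub_ediv_four (le_refl (2 * t + 1))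
  rw [Nat.sub_self, Finset.sum_range_zero] at hfloors
  rw [ehr_eq_sum_range (intCast_mem_smul_triangle hi ht)
    fun n h0 h => left_le_triangleRight_add_one hi h0 (by lia), mul_add,
    two_mul_sum_triangleRight hi, hfloors]
  ring

end Triangle

/-- The sides, in the encoding of `polyhedron`, of the pentagon with `i` interior and `b` boundary
lattice points, for `2 ≤ b ≤ 5 i + 4`. The third and fourth sides coincide for `i = 1`, the fourth
and fifth for `b = 5 i + 4`, so the pentagon may degenerate. -/
def pentagonSides (i b : ℤ) : Finset (ℤ × ℤ × ℤ) :=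
  {(0, -1, 0), (-4, 1, 2), (1, b + 2 - 5 * i, b - 2), (1, b - 3, b - 3 + i),
    (1, 5 * i + 1, 6 * i + 1)}

/-- The vertices, from the lowest to the highest, of the pentagon with sides `pentagonSides i b`. -/
def pentagonVertices (i b : ℚ) : Finset (ℚ × ℚ) :=
  {(-1 / 2, 0), (b - 2, 0), (4 / 5 * (b - 3) + i, 1 / 5), (i, 1), (-1 / 5, 6 / 5)}

/-- The right end of row `n` of the `t`-th dilate of the pentagon with sides `pentagonSides i b`:
the largest integer `m` for which `(m, n)` satisfies the three right-hand inequalities. -/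
def pentagonRight (i b t n : ℤ) : ℤ :=
  min ((b - 2) * t - (b + 2 - 5 * i) * n)
    (min ((b - 3 + i) * t - (b - 3) * n) ((6 * i + 1) * t - (5 * i + 1) * n))

section Pentagon

variable {i b : ℤ} (hi : 0 < i) (hb : 2 ≤ b) (hbi : b ≤ 5 * i + 4)

include hi in
lemma pentagon_subset_of_convex {S : Set (ℝ × ℝ)} (hS : Convex ℝ S)
    (hV : ∀ v ∈ pentagonVertices i b, qpt v ∈ S) : polyhedron (pentagonSides i b) ⊆ S := by
  rintro ⟨x, y⟩ hxy
  simp only [mem_polyhedron, pentagonSides, Finset.mem_insert, Finset.mem_singleton,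
    forall_eq_or_imp, forall_eq] at hxy
  simp only [qpt, pentagonVertices, Finset.mem_insert, Finset.mem_singleton,
    forall_eq_or_imp, forall_eq] at hV
  push_cast at hxy hV
  obtain ⟨hbottom, hleft, hlower, hmiddle, hupper⟩ := hxy
  obtain ⟨hv₁, hv₂, hv₃, hv₄, hv₅⟩ := hV
  have hi' : (1 : ℝ) ≤ i := by exact_mod_cast hi
  have hy0 : 0 ≤ y := by linarith
  have hy65 : y ≤ 6 / 5 := by nlinarith
  have hl : (-1 / 2 + 1 / 4 * y, y) ∈ S :=
    mem_of_line_mem hS (by convert hv₁ using 2; ring) (by convert hv₅ using 2; ring) hy0 hy65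
  obtain hy | hy := le_total y (1 / 5)
  · have hr : ((b - 2) + -(b + 2 - 5 * i) * y, y) ∈ S :=
      mem_of_line_mem hS (by convert hv₂ using 2; ring) (by convert hv₃ using 2; ring) hy0 hy
    exact mem_of_row_mem hS hl hr (by linarith) (by linarith)
  obtain hy' | hy' := le_total y 1
  · have hr : ((b - 3 + i) + -(b - 3) * y, y) ∈ S :=
      mem_of_line_mem hS (by convert hv₃ using 2; ring) (by convert hv₄ using 2; ring) hy hy'
    exact mem_of_row_mem hS hl hr (by linarith) (by linarith)
  · have hr : ((6 * i + 1) + -(5 * i + 1) * y, y) ∈ S :=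
      mem_of_line_mem hS (by convert hv₄ using 2; ring) (by convert hv₅ using 2; ring) hy' hy65
    exact mem_of_row_mem hS hl hr (by linarith) (by linarith)

include hi hb hbi in
lemma pentagon_eq_convexHull :
    polyhedron (pentagonSides i b)
      = convexHull ℝ (qpt '' (pentagonVertices i b : Set (ℚ × ℚ))) := by
  have hi' : (1 : ℚ) ≤ i := by exact_mod_cast hi
  have hb' : (2 : ℚ) ≤ b := by exact_mod_cast hb
  have hbi' : (b : ℚ) ≤ 5 * i + 4 := by exact_mod_cast hbi
  refine polyhedron_eq_convexHull ?_ fun S => pentagon_subset_of_convex hi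
  simp only [pentagonVertices, pentagonSides, qpt_mem_polyhedron, Finset.mem_insert,
    Finset.mem_singleton, forall_eq_or_imp, forall_eq]
  push_cast
  refine ⟨⟨?_, ?_, ?_, ?_, ?_⟩, ⟨?_, ?_, ?_, ?_, ?_⟩, ⟨?_, ?_, ?_, ?_, ?_⟩, ⟨?_, ?_, ?_, ?_, ?_⟩,
    ⟨?_, ?_, ?_, ?_, ?_⟩⟩ <;> linarith

include hi in
lemma intCast_mem_interior_pentagon (m n : ℤ) :
    ((m : ℝ), (n : ℝ)) ∈ interior (polyhedron (pentagonSides i b)) ↔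
      n = 1 ∧ 0 ≤ m ∧ m ≤ i - 1 := by
  rw [intCast_mem_interior_polyhedron (by simp [pentagonSides])]
  simp only [pentagonSides, Finset.mem_insert, Finset.mem_singleton, forall_eq_or_imp, forall_eq]
  constructor
  · rintro ⟨hbottom, hleft, hlower, hmiddle, hupper⟩
    have hn : n < 2 := by nlinarith
    obtain rfl : n = 1 := by lia
    lia
  · rintro ⟨rfl, hm, hmi⟩
    lia

include hi in
lemma intCast_mem_smul_pentagon {s r : ℕ} (hr : r < 5) (ht : 0 < 5 * s + r) (m n : ℤ) :
    ((m : ℝ), (n : ℝ)) ∈ ((5 * s + r : ℕ) : ℝ) • polyhedron (pentagonSides i b) ↔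
      (0 ≤ n ∧ n < (6 * s + r + 1 : ℕ)) ∧ -4 * m + n ≤ 2 * (5 * s + r : ℕ) ∧
        m ≤ pentagonRight i b (5 * s + r : ℕ) n := by
  rw [intCast_mem_smul_polyhedron _ ht, pentagonRight, le_min_iff, le_min_iff]
  simp only [pentagonSides, Finset.mem_insert, Finset.mem_singleton, forall_eq_or_imp, forall_eq]
  constructor
  · rintro ⟨hbottom, hleft, hlower, hmiddle, hupper⟩
    have hn : 5 * n ≤ 6 * (5 * s + r : ℕ) := by nlinarith
    lia
  · lia

include hi hbi in
lemma pentagonRight_of_five_mul_le {t n : ℤ} (hn : 5 * n ≤ t) (ht : 0 ≤ t) :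
    pentagonRight i b t n = (b - 2) * t - (b + 2 - 5 * i) * n := by
  refine min_eq_left (le_min ?_ ?_) <;> nlinarith

include hi hbi in
lemma pentagonRight_of_le {t n : ℤ} (hn : t ≤ 5 * n) (hnt : n ≤ t) :
    pentagonRight i b t n = (b - 3 + i) * t - (b - 3) * n := by
  rw [pentagonRight, min_eq_left (b := (6 * i + 1) * t - (5 * i + 1) * n) (by nlinarith),
    min_eq_right (by nlinarith)]

include hi hbi in
lemma pentagonRight_of_ge {t n : ℤ} (ht : 0 ≤ t) (hn : t ≤ n) :
    pentagonRight i b t n = (6 * i + 1) * t - (5 * i + 1) * n := by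
  rw [pentagonRight, min_eq_right (b := (6 * i + 1) * t - (5 * i + 1) * n) (by nlinarith),
    min_eq_right (by nlinarith)]

include hi hb hbi in
lemma left_le_pentagonRight_add_one {t n : ℤ} (hn0 : 0 ≤ n) (hn : 5 * n ≤ 6 * t) :
    n - 2 * t ≤ 4 * (pentagonRight i b t n + 1) := by
  have ht : 0 ≤ t := by lia
  obtain h₁ | h₁ := le_total (5 * n) t
  · rw [pentagonRight_of_five_mul_le hi hbi h₁ ht]
    have hsplit : 0 ≤ (b - 2) * (t - n) + (5 * i - 4) * n :=
      add_nonneg (mul_nonneg (by lia) (by lia)) (mul_nonneg (by lia) hn0)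
    linarith
  obtain h₂ | h₂ := le_total n t
  · rw [pentagonRight_of_le hi hbi h₁ h₂]
    have hsplit : 0 ≤ (b - 2) * (t - n) + (i - 1) * t :=
      add_nonneg (mul_nonneg (by lia) (by lia)) (mul_nonneg (by lia) ht)
    linarith
  · rw [pentagonRight_of_ge hi hbi ht h₂]
    have hsplit : 0 ≤ i * (6 * t - 5 * n) := mul_nonneg hi.le (by lia)
    linarith

include hi hbi in
lemma two_mul_sum_pentagonRight {s r : ℕ} (hr : r < 5) :
    2 * ∑ n ∈ Finset.range (6 * s + r + 1), (pentagonRight i b (5 * s + r : ℕ) n + 1)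
      = (2 * i + b - 3) * (5 * s + r) ^ 2 + (b + 1) * (5 * s + r) + 2
        + (4 * s * (s - 1) + 2 * r * s) := by
  have hlower : ∀ n ∈ Finset.range (s + 1), pentagonRight i b (5 * s + r : ℕ) n + 1
      = ((b - 2) * (5 * s + r) + 1) + (5 * i - b - 2) * n := fun n hn => by
    have := Finset.mem_range.1 hn
    rw [pentagonRight_of_five_mul_le hi hbi (by lia) (by lia)]
    push_cast
    ring
  have hmiddle : ∀ n ∈ Finset.range (4 * s + r),
      pentagonRight i b (5 * s + r : ℕ) (s + 1 + n : ℕ) + 1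
        = ((b - 3 + i) * (5 * s + r) - (b - 3) * (s + 1) + 1) + (3 - b) * n := fun n hn => by
    have := Finset.mem_range.1 hn
    rw [pentagonRight_of_le hi hbi (by lia) (by lia)]
    push_cast
    ring
  have hupper : ∀ n ∈ Finset.range s,
      pentagonRight i b (5 * s + r : ℕ) (s + 1 + (4 * s + r) + n : ℕ) + 1
        = (i * (5 * s + r) - 5 * i) + (-(5 * i + 1)) * n := fun n _ => by
    rw [pentagonRight_of_ge hi hbi (by lia) (by lia)]
    push_cast
    ring
  rw [show 6 * s + r + 1 = s + 1 + (4 * s + r) + s by ring, Finset.sum_range_add,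
    Finset.sum_range_add, Finset.sum_congr rfl hlower, Finset.sum_congr rfl hmiddle,
    Finset.sum_congr rfl hupper, mul_add, mul_add]
  simp only [two_mul_sum_range_add_mul]
  push_cast
  ring

include hi hb hbi in
lemma hasPickEhrhart_pentagon : HasPickEhrhart (polyhedron (pentagonSides i b)) i b := by
  intro t ht
  obtain ⟨s, r, hr, rfl⟩ : ∃ s r, r < 5 ∧ t = 5 * s + r :=
    ⟨t / 5, t % 5, Nat.mod_lt _ (by norm_num), (Nat.div_add_mod t 5).symm⟩
  have hfloors := two_mul_sum_range_sub_ediv_four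
    (show 6 * s + r + 1 ≤ 2 * (5 * s + r) + 1 by lia)
  have hmissing := two_mul_sum_range_ediv (show r ≤ 4 by lia) s
  rw [show 2 * (5 * s + r) + 1 - (6 * s + r + 1) = 4 * s + r by lia] at hfloors
  push_cast at hmissing
  rw [ehr_eq_sum_range (intCast_mem_smul_pentagon hi hr ht)
    fun n h0 h => left_le_pentagonRight_add_one hi hb hbi h0 (by lia), mul_add,
    two_mul_sum_pentagonRight hi hbi hr, hfloors, hmissing]
  push_cast
  ring

end Pentagon

lemma exists_polyhedron_hasPickEhrhart {i b : ℤ} (hi : 0 < i) (hb : 0 < b)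
    (hbi : b ≤ 5 * i + 4) :
    ∃ (H : Finset (ℤ × ℤ × ℤ)) (V : Finset (ℚ × ℚ)),
      polyhedron H = convexHull ℝ (qpt '' (V : Set (ℚ × ℚ))) ∧
      (interior (polyhedron H) ∩ latticePts).ncard = i ∧ HasPickEhrhart (polyhedron H) i b := by
  obtain rfl | hb' : b = 1 ∨ 2 ≤ b := by lia
  · exact ⟨_, _, triangle_eq_convexHull hi,
      ncard_interior_of_single_row hi (intCast_mem_interior_triangle hi),
      hasPickEhrhart_triangle hi⟩
  · exact ⟨_, _, pentagon_eq_convexHull hi hb' hbi,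
      ncard_interior_of_single_row hi (intCast_mem_interior_pentagon hi),
      hasPickEhrhart_pentagon hi hb' hbi⟩

/-- for all positive integers i, b with b ≤ 5i + 4 there is a
rational pseudointegral polygon with exactly i interior and b boundary lattice
points. -/
theorem stmt_9 (i b : ℕ) (hi : 0 < i) (hb : 0 < b) (hbi : b ≤ 5 * i + 4) :
    ∃ P : Set (ℝ × ℝ), IsRatPolygon P ∧ IsPIP P ∧
      (interior P ∩ latticePts).ncard = i ∧
      (frontier P ∩ latticePts).ncard = b := by
  obtain ⟨H, V, hV, hint, hehr⟩ := exists_polyhedron_hasPickEhrhart (i := i) (b := b)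
    (by exact_mod_cast hi) (by exact_mod_cast hb) (by exact_mod_cast hbi)
  have hbd := hehr.ncard_frontier (isClosed_polyhedron H) (by lia) hint
  norm_cast at hint hbd
  have hne : (interior (polyhedron H)).Nonempty :=
    (nonempty_of_ncard_ne_zero (hint.trans_ne hi.ne')).mono inter_subset_left
  exact ⟨polyhedron H, ⟨V, hV, hne⟩, isPIP_of_two_mul_ehr_eq (a := 2 * i + b - 2) (b := b) (c := 2)
    hehr, hint, hbd⟩
end
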